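/- arXiv:1902.06108 — 2 statements merged into one kernel-verified Lean document; each statement's English description precedes it below -/
import Mathlib

section
/- Let c ∈ C ↦ H_c be a continuous family (for the C² compact-open topology) of C²-convex-in-the-fiber Hamiltonians on T*M, C a metric space. Fix (x, c₀, λ₀) ∈ 𝒰₊^∞ and ε > 0. Then there exist a neighborhood 𝒩₋ of (x, c₀, λ₀) in T*M × C × ℝ and T > 0 such that: (a) for every (t, y, c, λ) ∈ 𝒰₊ with (y, c, λ) ∈ 𝒩₋ and t ≥ T, one has h(t, y, c, λ) ≥ h₋(x, c₀, λ₀) − ε·Id; (b) for every (y, c, λ) ∈ 𝒩₋ ∩ 𝒰₊^∞, one has h₋(y, c, λ) ≥ h₋(x, c₀, λ₀) − ε·Id. -/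
/-!
Throughout, the closed manifold `M = 𝕋^d = ℝ^d/ℤ^d` is modelled by `ℤ^d`-periodic
functions on `ℝ^d` (with the Euclidean structure), and its (co)tangent bundle
`T^*𝕋^d = 𝕋^d × ℝ^d` by `ℤ^d`-periodic (in the base variable) data on `ℝ^d × ℝ^d`.
-/

open scoped RealInnerProductSpace
open Filter MeasureTheory Metric Set Asymptotics

noncomputable section

/-- The universal cover `ℝ^d` of the torus `𝕋^d`. -/
abbrev Euc (d : ℕ) : Type := EuclideanSpace ℝ (Fin d)

/-- The phase space `T^*𝕋^d`, modelled as `ℝ^d × ℝ^d` with `ℤ^d`-periodic data. -/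
abbrev Phase (d : ℕ) : Type := Euc d × Euc d

/-- An integer vector, viewed in `ℝ^d`. -/
def intVec {d : ℕ} (k : Fin d → ℤ) : Euc d := WithLp.toLp 2 fun i => (k i : ℝ)

/-- `f` descends to the torus `𝕋^d = ℝ^d/ℤ^d`. -/
def PerFun {d : ℕ} {α : Type*} (f : Euc d → α) : Prop :=
  ∀ (k : Fin d → ℤ) (x : Euc d), f (x + intVec k) = f x

/-- `H` descends to `T^*𝕋^d = 𝕋^d × ℝ^d`. -/
def PerPhase {d : ℕ} {α : Type*} (H : Phase d → α) : Prop :=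
  ∀ (k : Fin d → ℤ) (q p : Euc d), H (q + intVec k, p) = H (q, p)

/-- Positive definiteness of the fiberwise Hessian. -/
def ConvexInFiber {d : ℕ} (H : Phase d → ℝ) : Prop :=
  ∀ q p v, v ≠ 0 → 0 < iteratedFDeriv ℝ 2 (fun p' => H (q, p')) p ![v, v]

/-- A `C²` Tonelli Hamiltonian on `T^*𝕋^d`. -/
structure TonelliHam {d : ℕ} (H : Phase d → ℝ) : Prop where
  periodic : PerPhase H
  smooth : ContDiff ℝ 2 H
  convex : ConvexInFiber H
  superlinear : ∀ A : ℝ, ∃ B : ℝ, ∀ q p, A * ‖p‖ + B ≤ H (q, p)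

/-- A `C²` Tonelli Lagrangian on `T𝕋^d`. -/
structure TonelliLag {d : ℕ} (L : Phase d → ℝ) : Prop where
  periodic : PerPhase L
  smooth : ContDiff ℝ 2 L
  convex : ConvexInFiber L
  superlinear : ∀ A : ℝ, ∃ B : ℝ, ∀ q v, A * ‖v‖ + B ≤ L (q, v)

/-- The Lagrangian associated to `H` by Legendre duality. -/
def LegendreL {d : ℕ} (H : Phase d → ℝ) (x : Phase d) : ℝ :=
  sSup {r | ∃ p : Euc d, r = ⟪p, x.2⟫ - H (x.1, p)}

/-- The Mañé critical value `α(H)`. -/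
def maneCritical {d : ℕ} (H : Phase d → ℝ) : ℝ :=
  sInf {c | ∃ u : Euc d → ℝ, ContDiff ℝ (⊤ : ℕ∞) u ∧ PerFun u ∧ ∀ q, H (q, gradient u q) ≤ c}

/-- The Mañé critical value `α(c)` of the cohomology class of the constant form `cf`. -/
def maneCriticalOf {d : ℕ} (H : Phase d → ℝ) (cf : Euc d) : ℝ :=
  maneCritical fun x : Phase d => H (x.1, cf + x.2)

/-- `γ` is absolutely continuous on `[a,b]` with a.e. derivative `γ'`. -/
def ACOn {d : ℕ} (γ γ' : ℝ → Euc d) (a b : ℝ) : Prop :=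
  IntervalIntegrable γ' volume a b ∧ ∀ t ∈ Icc a b, γ t = γ a + ∫ s in a..t, γ' s

/-- Values entering the (discounted, cohomologically twisted) Lax–Oleinik infimum. -/
def LOvals {d : ℕ} (L : Phase d → ℝ) (cf : Euc d) (av lam : ℝ) (u : Euc d → ℝ) (t : ℝ)
    (q : Euc d) : Set ℝ :=
  {r | ∃ γ γ' : ℝ → Euc d, ACOn γ γ' (-t) 0 ∧ γ 0 = q ∧
     IntervalIntegrable (fun s => Real.exp (lam * s) * (L (γ s, γ' s) - ⟪cf, γ' s⟫ + av))
       volume (-t) 0 ∧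
     r = Real.exp (-(lam * t)) * u (γ (-t)) +
         ∫ s in (-t)..0, Real.exp (lam * s) * (L (γ s, γ' s) - ⟪cf, γ' s⟫ + av)}

/-- The (discounted, twisted) Lax–Oleinik semigroup `T^{cf,λ}_t u (q)`. -/
def LaxOleinik {d : ℕ} (L : Phase d → ℝ) (cf : Euc d) (av lam : ℝ) (u : Euc d → ℝ) (t : ℝ)
    (q : Euc d) : ℝ :=
  sInf (LOvals L cf av lam u t q)

/-- A weak K.A.M. solution: a fixed point of the Lax–Oleinik semigroup. -/
def IsWeakKAM {d : ℕ} (H : Phase d → ℝ) (u : Euc d → ℝ) : Prop :=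
  Continuous u ∧ PerFun u ∧
    ∀ t > (0:ℝ), ∀ q, LaxOleinik (LegendreL H) 0 (maneCritical H) 0 u t q = u q

/-- A fixed point of the modified Lax–Oleinik semigroup `T^c_t` for the class `cf`. -/
def IsFixedPtModified {d : ℕ} (H : Phase d → ℝ) (cf : Euc d) (u : Euc d → ℝ) : Prop :=
  Continuous u ∧ PerFun u ∧
    ∀ t > (0:ℝ), ∀ q, LaxOleinik (LegendreL H) cf (maneCriticalOf H cf) 0 u t q = u q

/-- The discounted solution `u_λ` of `λu + H(x,du) = α(H)`, via its variational formula. -/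
def IsDiscountedSol {d : ℕ} (H : Phase d → ℝ) (lam : ℝ) (u : Euc d → ℝ) : Prop :=
  Continuous u ∧ PerFun u ∧
    ∀ q, u q = sInf {r | ∃ γ γ' : ℝ → Euc d, (∀ a ≤ (0:ℝ), ACOn γ γ' a 0) ∧ γ 0 = q ∧
      IntegrableOn (fun s => Real.exp (lam * s) * (LegendreL H (γ s, γ' s) + maneCritical H))
        (Iic 0) volume ∧
      r = ∫ s in Iic (0:ℝ), Real.exp (lam * s) * (LegendreL H (γ s, γ' s) + maneCritical H)}

/-- The `λ`-discounted Hamiltonian vector field `(∂H/∂p, -∂H/∂q - λp)`. -/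
def hamVF {d : ℕ} (H : Phase d → ℝ) (lam : ℝ) (x : Phase d) : Phase d :=
  (gradient (fun p => H (x.1, p)) x.2, -gradient (fun q => H (q, x.2)) x.1 - lam • x.2)

/-- `φ` is the (conformally) Hamiltonian flow of equation (1) for `(H, λ)`. -/
def IsConformalFlow {d : ℕ} (H : Phase d → ℝ) (lam : ℝ) (φ : ℝ → Phase d → Phase d) : Prop :=
  (∀ x, φ 0 x = x) ∧ (∀ s t x, φ s (φ t x) = φ (s + t) x) ∧
    ∀ x t, HasDerivAt (fun τ => φ τ x) (hamVF H lam (φ t x)) t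

/-- The vertical subspace `V = ker Dπ`. -/
def Vert (d : ℕ) : Submodule ℝ (Phase d) :=
  Submodule.prod (⊥ : Submodule ℝ (Euc d)) (⊤ : Submodule ℝ (Euc d))

/-- The image `Dφ_t(y) V(y)` of the vertical at `y` by the linearized flow. -/
def pushV {d : ℕ} (φ : ℝ → Phase d → Phase d) (t : ℝ) (y : Phase d) : Submodule ℝ (Phase d) :=
  Submodule.map (fderiv ℝ (φ t) y).toLinearMap (Vert d)

/-- `G_t(x) = Dφ_t V(φ_{-t} x)`. -/
def GreenT {d : ℕ} (φ : ℝ → Phase d → Phase d) (t : ℝ) (x : Phase d) : Submodule ℝ (Phase d) :=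
  pushV φ t (φ (-t) x)

/-- The piece of orbit `(φ_t x)_{t ∈ I}` has no conjugate points. -/
def NoConjPts {d : ℕ} (φ : ℝ → Phase d → Phase d) (x : Phase d) (I : Set ℝ) : Prop :=
  ∀ s ∈ I, ∀ t ∈ I, s ≠ t → pushV φ (t - s) (φ s x) ⊓ Vert d = ⊥

/-- `S` is the height `ℋ(G)` of the Lagrangian subspace `G`:
`G` is the graph `{(δθ, S δθ)}` of the symmetric map `S`. -/
def IsHeight {d : ℕ} (G : Submodule ℝ (Phase d)) (S : Euc d →L[ℝ] Euc d) : Prop :=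
  (∀ v w, ⟪S v, w⟫ = ⟪v, S w⟫) ∧ G = LinearMap.graph (S : Euc d →ₗ[ℝ] Euc d)

open Classical in
/-- The height of a subspace transverse to the vertical (junk value `0` otherwise). -/
def heightOf {d : ℕ} (G : Submodule ℝ (Phase d)) : Euc d →L[ℝ] Euc d :=
  if h : ∃ S, IsHeight G S then h.choose else 0

/-- Order of symmetric operators as quadratic forms. -/
def SymLE {d : ℕ} (S T : Euc d →L[ℝ] Euc d) : Prop := ∀ v, ⟪S v, v⟫ ≤ ⟪T v, v⟫

/-- Strict order of symmetric operators as quadratic forms (positive definite difference). -/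
def SymLT {d : ℕ} (S T : Euc d →L[ℝ] Euc d) : Prop := ∀ v, v ≠ 0 → ⟪S v, v⟫ < ⟪T v, v⟫

/-- `u` has (Alexandrov) derivative `p` and second derivative `S` at `θ`. -/
def HasAlexandrovAt {d : ℕ} (u : Euc d → ℝ) (p : Euc d) (S : Euc d →L[ℝ] Euc d)
    (θ : Euc d) : Prop :=
  HasGradientAt u p θ ∧
    (fun y => u y - u θ - ⟪p, y - θ⟫ - (1/2) * ⟪S (y - θ), y - θ⟫)
      =o[nhds θ] fun y => ‖y - θ‖ ^ 2

open Classical in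
/-- The Alexandrov second derivative `D²u(θ)` (junk value `0` where it does not exist). -/
def D2 {d : ℕ} (u : Euc d → ℝ) (θ : Euc d) : Euc d →L[ℝ] Euc d :=
  if h : ∃ pS : Euc d × (Euc d →L[ℝ] Euc d), HasAlexandrovAt u pS.1 pS.2 θ then h.choose.2 else 0

/-- `‖S‖ = sup_{‖v‖=1} |S(v,v)|`. -/
def qNorm {d : ℕ} (S : Euc d →L[ℝ] Euc d) : ℝ :=
  ⨆ v : (sphere (0 : Euc d) 1 : Set (Euc d)), |⟪S v.1, v.1⟫|

/-- A fundamental domain of `𝕋^d` in `ℝ^d`. -/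
def fundCube (d : ℕ) : Set (Euc d) := {x | ∀ i, x i ∈ Ico (0:ℝ) 1}

/-- The distance `d_{2,1}(u,v) = ∫_{𝕋^d} ‖D²u - D²v‖`. -/
def d21 {d : ℕ} (u v : Euc d → ℝ) : ℝ := ∫ θ in fundCube d, qNorm (D2 u θ - D2 v θ)

/-- Semi-concavity. -/
def SemiConcave {d : ℕ} (u : Euc d → ℝ) : Prop :=
  ∃ K : ℝ, ∀ x, ∃ p, ∀ y, u y ≤ u x + ⟪p, y - x⟫ + K * ‖y - x‖ ^ 2

/-- `u` is upper Green regular: at Lebesgue-a.e. `θ`, `ℋ(G₊(θ, du(θ))) = D²u(θ)`. -/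
def UpperGreenRegular {d : ℕ} (φ : ℝ → Phase d → Phase d) (u : Euc d → ℝ) : Prop :=
  ∀ᵐ θ ∂(volume : Measure (Euc d)), ∃ p S, HasGradientAt u p θ ∧
    (∀ t > (0:ℝ), ∃ S', IsHeight (GreenT φ t (θ, p)) S') ∧
    Tendsto (fun t : ℝ => heightOf (GreenT φ t (θ, p))) atTop (nhds S) ∧
    HasAlexandrovAt u p S θ

/-- The graph `𝒢(du) ⊂ T^*𝕋^d` of the differential of `u`. -/
def gradGraph {d : ℕ} (u : Euc d → ℝ) : Set (Phase d) := {x | HasGradientAt u x.2 x.1}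

/-- The graph `𝒢(η_c + du)` where `η_c` is the constant form `cf`. -/
def gradGraphShift {d : ℕ} (cf : Euc d) (u : Euc d → ℝ) : Set (Phase d) :=
  {x | ∃ p, HasGradientAt u p x.1 ∧ x.2 = cf + p}

/-- Continuity of `c ↦ H_c` for the `C²` compact-open topology. -/
def C2CompactOpenCont {d : ℕ} {C : Type*} [MetricSpace C] (Hfam : C → Phase d → ℝ) : Prop :=
  ∀ (c0 : C) (K : Set (Phase d)), IsCompact K → ∀ ε > (0:ℝ), ∃ δ > (0:ℝ), ∀ c : C,
    dist c c0 < δ → ∀ j : ℕ, j ≤ 2 → ∀ x ∈ K,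
      ‖iteratedFDeriv ℝ j (Hfam c) x - iteratedFDeriv ℝ j (Hfam c0) x‖ ≤ ε

/-- `h(t, x, c, λ) = ℋ(G_{-t}^{c,λ}(x))`, the height of `Dφ_{-t} V(φ_t x)`. -/
def hGreenMinus {d : ℕ} (φ : ℝ → Phase d → Phase d) (t : ℝ) (x : Phase d) :
    Euc d →L[ℝ] Euc d :=
  heightOf (pushV φ (-t) (φ t x))

/-- `h(-t, x, c, λ) = ℋ(G_t^{c,λ}(x))`, the height of `Dφ_t V(φ_{-t} x)`. -/
def hGreenPlus {d : ℕ} (φ : ℝ → Phase d → Phase d) (t : ℝ) (x : Phase d) :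
    Euc d →L[ℝ] Euc d :=
  heightOf (pushV φ t (φ (-t) x))

section ODEpart

variable {E : Type*} [NormedAddCommGroup E] [NormedSpace ℝ E]

lemma aux_fence {f f' : ℝ → E} {T K η e r : ℝ}
    (hd : ∀ t ∈ Icc 0 T, HasDerivAt f (f' t) t) (h0 : ‖f 0‖ ≤ η) (hη : e < η) (hK : 0 ≤ K)
    (he : 0 ≤ e) (hr : η * Real.exp ((K + 1) * T) ≤ r)
    (hb : ∀ t ∈ Icc 0 T, ‖f t‖ ≤ r → ‖f' t‖ ≤ K * ‖f t‖ + e) :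
    ∀ t ∈ Icc 0 T, ‖f t‖ ≤ η * Real.exp ((K + 1) * T) := by
  have hη0 : 0 < η := lt_of_le_of_lt he hη
  have hmono : ∀ t ∈ Icc 0 T, η * Real.exp ((K + 1) * t) ≤ η * Real.exp ((K + 1) * T) := by
    intro t ht
    have : (K + 1) * t ≤ (K + 1) * T := mul_le_mul_of_nonneg_left ht.2 (by linarith)
    gcongr
  have key : ∀ ⦃t⦄, t ∈ Icc 0 T → ‖f t‖ ≤ η * Real.exp ((K + 1) * t) := by
    refine image_norm_le_of_norm_deriv_right_lt_deriv_boundary (f' := f')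
      (B' := fun t => η * (Real.exp ((K + 1) * t) * ((K + 1) * 1)))
      (fun t ht => (hd t ht).continuousAt.continuousWithinAt)
      (fun t ht => (hd t ⟨ht.1, ht.2.le⟩).hasDerivWithinAt) (by simpa using h0) ?_ ?_
    · intro t
      exact (((hasDerivAt_id t).const_mul (K + 1)).exp).const_mul η
    · intro t ht hft
      have ht' : t ∈ Icc 0 T := ⟨ht.1, ht.2.le⟩
      have h1 := hb t ht' (by rw [hft]; exact (hmono t ht').trans hr)
      have h2 : 1 ≤ Real.exp ((K + 1) * t) := by
        apply Real.one_le_exp; exact mul_nonneg (by linarith) ht.1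
      have h3 : η ≤ η * Real.exp ((K + 1) * t) := by nlinarith
      rw [hft] at h1
      nlinarith
  exact fun t ht => (key ht).trans (hmono t ht)

lemma aux_lin [CompleteSpace E] (L : ℝ → E →L[ℝ] E) (hL : Continuous L) (r0 : E) (T : ℝ)
    (hT : 0 ≤ T) :
    ∃ R : ℝ → E, R 0 = r0 ∧ ∀ t ∈ Icc 0 T, HasDerivAt R (L t (R t)) t := by
  obtain ⟨K0, hK0⟩ := (isCompact_Icc (a := (0:ℝ)) (b := T)).exists_bound_of_continuousOn
    hL.continuousOn
  set K : ℝ := max K0 0 with hKd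
  have hKn : 0 ≤ K := le_max_right _ _
  have hK : ∀ t ∈ Icc 0 T, ‖L t‖ ≤ K := fun t ht => (hK0 t ht).trans (le_max_left _ _)
  set μ : ℝ := 2 * K + 1 with hμ
  have hμ0 : 0 < μ := by linarith
  let ex : C(Icc (0:ℝ) T, E) → ℝ → E := fun u s => u (projIcc 0 T hT s)
  have hex : ∀ u, Continuous (ex u) := fun u => u.continuous.comp continuous_projIcc
  let g : C(Icc (0:ℝ) T, E) → ℝ → E := fun u s => Real.exp (μ * s) • L s (ex u s)
  have hg : ∀ u, Continuous (g u) := fun u => by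
    have := hex u
    exact (by fun_prop : Continuous fun s : ℝ => Real.exp (μ * s)).smul (hL.clm_apply this)
  have hprim : ∀ u t, HasDerivAt (fun t => ∫ s in (0:ℝ)..t, g u s) (g u t) t := fun u t =>
    intervalIntegral.integral_hasDerivAt_right ((hg u).intervalIntegrable _ _)
      ((hg u).stronglyMeasurableAtFilter _ _) (hg u).continuousAt
  have hprimc : ∀ u, Continuous (fun t => ∫ s in (0:ℝ)..t, g u s) := fun u =>
    continuous_iff_continuousAt.2 fun t => (hprim u t).continuousAt
  let Φ : C(Icc (0:ℝ) T, E) → C(Icc (0:ℝ) T, E) := fun u =>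
    ⟨fun t => Real.exp (-(μ * t)) • (r0 + ∫ s in (0:ℝ)..t, g u s), by
      have := hprimc u
      have h2 := this.comp (continuous_subtype_val (p := fun t => t ∈ Icc (0:ℝ) T))
      exact (by fun_prop : Continuous fun t : Icc (0:ℝ) T => Real.exp (-(μ * (t:ℝ)))).smul
        (continuous_const.add h2)⟩
  have hcontr : ContractingWith (1/2 : NNReal) Φ := by
    refine ⟨by rw [← NNReal.coe_lt_coe]; norm_num, LipschitzWith.of_dist_le_mul fun u v => ?_⟩
    rw [ContinuousMap.dist_le (by positivity)]
    intro t
    have ht := t.2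
    have e1 : (Φ u) t - (Φ v) t
        = Real.exp (-(μ * t)) • ∫ s in (0:ℝ)..t, (g u s - g v s) := by
      rw [intervalIntegral.integral_sub ((hg u).intervalIntegrable _ _)
        ((hg v).intervalIntegrable _ _)]
      change Real.exp (-(μ * t)) • (r0 + ∫ s in (0:ℝ)..t, g u s)
        - Real.exp (-(μ * t)) • (r0 + ∫ s in (0:ℝ)..t, g v s) = _
      rw [← smul_sub]; congr 1; abel
    have e2 : ‖∫ s in (0:ℝ)..t, (g u s - g v s)‖
        ≤ ∫ s in (0:ℝ)..t, Real.exp (μ * s) * (K * dist u v) := by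
      refine intervalIntegral.norm_integral_le_of_norm_le ht.1 ?_ ?_
      · refine Filter.Eventually.of_forall fun s hs => ?_
        have : g u s - g v s = Real.exp (μ * s) • L s (ex u s - ex v s) := by
          simp only [g, map_sub, smul_sub]
        rw [this, norm_smul, Real.norm_eq_abs, abs_of_pos (Real.exp_pos _)]
        gcongr
        refine (L s).le_of_opNorm_le (hK s ⟨hs.1.le, hs.2.trans ht.2⟩) _ |>.trans ?_
        gcongr
        rw [← dist_eq_norm]
        exact ContinuousMap.dist_apply_le_dist _
      · exact Continuous.intervalIntegrable (by fun_prop) _ _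
    have e3 : ∫ s in (0:ℝ)..t, Real.exp (μ * s) * (K * dist u v)
        = (Real.exp (μ * t) - 1) / μ * (K * dist u v) := by
      rw [intervalIntegral.integral_mul_const]
      congr 1
      rw [intervalIntegral.integral_eq_sub_of_hasDerivAt (f := fun s => Real.exp (μ * s) / μ)]
      · simp; ring
      · intro s _
        have : HasDerivAt (fun s : ℝ => Real.exp (μ * s) / μ)
            (Real.exp (μ * s) * (μ * 1) / μ) s :=
          (((hasDerivAt_id s).const_mul μ).exp).div_const μ
        refine this.congr_deriv ?_
        field_simp
      · exact Continuous.intervalIntegrable (by fun_prop) _ _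
    rw [dist_eq_norm, e1, norm_smul, Real.norm_eq_abs, abs_of_pos (Real.exp_pos _)]
    calc Real.exp (-(μ * t)) * ‖∫ s in (0:ℝ)..t, (g u s - g v s)‖
        ≤ Real.exp (-(μ * t)) * ((Real.exp (μ * t) - 1) / μ * (K * dist u v)) := by
          gcongr; rw [← e3]; exact e2
      _ = (1 - Real.exp (-(μ * t))) * ((K / μ) * dist u v) := by
          have : Real.exp (-(μ * t)) * Real.exp (μ * t) = 1 := by
            rw [← Real.exp_add]; simp
          field_simp
          linear_combination K * dist u v * this
      _ ≤ 1 * ((1/2) * dist u v) := by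
          have h1 : K / μ ≤ 1/2 := by rw [div_le_iff₀ hμ0]; linarith
          have h2 := Real.exp_pos (-(μ * t))
          have h3 : 0 ≤ 1 - Real.exp (-(μ * t)) := by
            have : Real.exp (-(μ * t)) ≤ 1 := Real.exp_le_one_iff.2 (by
              have := mul_nonneg hμ0.le ht.1; linarith)
            linarith
          gcongr
          linarith
      _ = _ := by simp
  have : Nonempty C(Icc (0:ℝ) T, E) := ⟨0⟩
  set u := ContractingWith.fixedPoint Φ hcontr
  have hu : Φ u = u := hcontr.fixedPoint_isFixedPt
  refine ⟨fun t => r0 + ∫ s in (0:ℝ)..t, g u s, by simp, fun t ht => ?_⟩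
  have h1 := (hprim u t).const_add r0
  convert h1 using 1
  have h2 : Real.exp (-(μ * t)) • (r0 + ∫ s in (0:ℝ)..t, g u s) = u ⟨t, ht⟩ :=
    congrArg (fun w : C(Icc (0:ℝ) T, E) => w ⟨t, ht⟩) hu
  simp only [g, ex]
  rw [projIcc_of_mem hT ht, ← h2, map_smul, smul_smul, ← Real.exp_add]
  simp
  rfl

/-- uniform estimates of a C¹ field near a compact arc -/
lemma aux_tube [ProperSpace E] {X : E → E} (hX : ContDiff ℝ 1 X) {γ : ℝ → E}
    (hγ : Continuous γ) (T : ℝ) :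
    ∃ K : Set E, IsCompact K ∧ (∀ t ∈ Icc 0 T, closedBall (γ t) 1 ⊆ K) ∧
    (∃ M : ℝ, 0 ≤ M ∧ ∀ z ∈ K, ‖fderiv ℝ X z‖ ≤ M) ∧
    ∀ ε > 0, ∃ δ > 0, δ ≤ 1 ∧ ∀ t ∈ Icc 0 T, ∀ b, ‖b - γ t‖ ≤ δ →
      ‖fderiv ℝ X b - fderiv ℝ X (γ t)‖ ≤ ε := by
  have hc : Continuous (fderiv ℝ X) := hX.continuous_fderiv (by norm_num)
  have hKc : IsCompact (cthickening 1 (γ '' Icc 0 T)) :=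
    ((isCompact_Icc).image hγ).cthickening
  have hsub : ∀ t ∈ Icc 0 T, closedBall (γ t) 1 ⊆ cthickening 1 (γ '' Icc 0 T) :=
    fun t ht => closedBall_subset_cthickening (mem_image_of_mem _ ht) 1
  refine ⟨_, hKc, hsub, ?_, ?_⟩
  · obtain ⟨M, hM⟩ := hKc.exists_bound_of_continuousOn hc.continuousOn
    exact ⟨max M 0, le_max_right _ _, fun z hz => (hM z hz).trans (le_max_left _ _)⟩
  · intro ε hε
    have := hKc.uniformContinuousOn_of_continuous hc.continuousOn
    rw [Metric.uniformContinuousOn_iff] at this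
    obtain ⟨δ, hδ, h⟩ := this ε hε
    refine ⟨min (δ / 2) 1, by positivity, min_le_right _ _, fun t ht b hb => ?_⟩
    rw [← dist_eq_norm] at hb ⊢
    refine (h b (hsub t ht ?_) (γ t) (hsub t ht ?_) ?_).le
    · exact hb.trans (min_le_right _ _)
    · exact mem_closedBall_self (by norm_num)
    · have := hb.trans (min_le_left _ _); linarith

lemma aux_lip {X : E → E} (hX : ContDiff ℝ 1 X) {a b : E} {M r : ℝ}
    (hM : ∀ z ∈ closedBall a r, ‖fderiv ℝ X z‖ ≤ M) (hb : ‖b - a‖ ≤ r) :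
    ‖X b - X a‖ ≤ M * ‖b - a‖ := by
  have hr : 0 ≤ r := (norm_nonneg _).trans hb
  exact (convex_closedBall a r).norm_image_sub_le_of_norm_fderiv_le
    (fun z _ => (hX.differentiable (by norm_num)) z) hM (mem_closedBall_self hr)
    (by rwa [mem_closedBall, dist_eq_norm])

lemma aux_lin_approx {X : E → E} (hX : ContDiff ℝ 1 X) {a b : E} {e r : ℝ}
    (hM : ∀ z ∈ closedBall a r, ‖fderiv ℝ X z - fderiv ℝ X a‖ ≤ e) (hb : ‖b - a‖ ≤ r) :
    ‖X b - X a - fderiv ℝ X a (b - a)‖ ≤ e * ‖b - a‖ := by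
  have hr : 0 ≤ r := (norm_nonneg _).trans hb
  exact (convex_closedBall a r).norm_image_sub_le_of_norm_fderiv_le'
    (fun z _ => (hX.differentiable (by norm_num)) z) hM (mem_closedBall_self hr)
    (by rwa [mem_closedBall, dist_eq_norm])

lemma aux_diff [ProperSpace E] [CompleteSpace E] {X : E → E} (hX : ContDiff ℝ 1 X)
    {φ : ℝ → E → E} (h0 : ∀ x, φ 0 x = x) (hφ : ∀ x t, HasDerivAt (fun s => φ s x) (X (φ t x)) t)
    (y : E) (T : ℝ) (hT : 0 ≤ T) :
    ∃ R : ℝ → E →L[ℝ] E, R 0 = ContinuousLinearMap.id ℝ E ∧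
      (∀ t ∈ Icc 0 T, HasDerivAt R ((fderiv ℝ X (φ t y)).comp (R t)) t) ∧
      ∀ t ∈ Icc 0 T, HasFDerivAt (φ t) (R t) y := by
  have hγ : Continuous fun t => φ t y :=
    continuous_iff_continuousAt.2 fun t => (hφ y t).continuousAt
  have hc : Continuous (fderiv ℝ X) := hX.continuous_fderiv (by norm_num)
  obtain ⟨R, hR0, hR⟩ := aux_lin (fun t => ContinuousLinearMap.compL ℝ E E E (fderiv ℝ X (φ t y)))
    ((ContinuousLinearMap.compL ℝ E E E).continuous.comp (hc.comp hγ))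
    (ContinuousLinearMap.id ℝ E) T hT
  refine ⟨R, hR0, hR, ?_⟩
  obtain ⟨Kt, -, hsub, ⟨M, hM0, hM⟩, hunif⟩ := aux_tube hX hγ T
  set G := Real.exp ((M + 1) * T) with hG
  have hGp : 0 < G := Real.exp_pos _
  -- Lipschitz estimate
  have hlip : ∀ ξ : E, ‖ξ‖ * G ≤ 1 → ∀ t ∈ Icc 0 T, ‖φ t (y + ξ) - φ t y‖ ≤ ‖ξ‖ * G := by
    intro ξ hξ
    rcases eq_or_ne ξ 0 with rfl | hne
    · intro t _; simp
    refine aux_fence (f := fun t => φ t (y + ξ) - φ t y)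
      (f' := fun t => X (φ t (y + ξ)) - X (φ t y)) (K := M) (e := 0) (r := 1)
      (fun t _ => (hφ _ t).sub (hφ _ t)) (by simp [h0]) (norm_pos_iff.2 hne) hM0 le_rfl hξ ?_
    intro t ht h1
    rw [add_zero]
    exact aux_lip hX (fun z hz => hM z (hsub t ht hz)) h1
  intro t0 ht0
  rw [hasFDerivAt_iff_isLittleO_nhds_zero, Asymptotics.isLittleO_iff]
  intro ε hε
  set e : ℝ := ε / (2 * G * G) with he
  have he0 : 0 < e := by positivity
  obtain ⟨δ, hδ, hδ1, hun⟩ := hunif e he0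
  have hev : ∀ᶠ ξ : E in nhds 0, ‖ξ‖ < δ / G := by
    have := Metric.ball_mem_nhds (0:E) (show 0 < δ / G by positivity)
    filter_upwards [this] with ξ hξ using by simpa using hξ
  filter_upwards [hev] with ξ hξ
  rw [lt_div_iff₀ hGp] at hξ
  rcases eq_or_ne ξ 0 with rfl | hne
  · simp
  have hξp := norm_pos_iff.2 hne
  have hl := hlip ξ (by linarith)
  have := aux_fence (f := fun t => φ t (y + ξ) - φ t y - R t ξ)
    (f' := fun t => X (φ t (y + ξ)) - X (φ t y) - (fderiv ℝ X (φ t y)).comp (R t) ξ)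
    (T := T) (K := M) (e := e * (‖ξ‖ * G)) (η := 2 * (e * (‖ξ‖ * G)))
    (r := 2 * (e * (‖ξ‖ * G)) * G)
    (fun t ht => ((hφ _ t).sub (hφ _ t)).sub ((hR t ht).clm_apply (hasDerivAt_const t ξ) |>.congr_deriv (by simp)))
    (by simp [h0, hR0]; positivity) (by have : 0 < e * (‖ξ‖ * G) := by positivity
                                        linarith) hM0 (by positivity) le_rfl ?_ t0 ht0
  · refine this.trans (le_of_eq ?_)
    rw [← hG, he]; field_simp
  · intro t ht _
    have hd : ‖φ t (y + ξ) - φ t y‖ ≤ δ := (hl t ht).trans hξ.le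
    have h1 := aux_lin_approx hX (a := φ t y) (b := φ t (y + ξ)) (e := e) (r := δ)
      (fun z hz => hun t ht z (by rwa [mem_closedBall, dist_eq_norm] at hz)) hd
    have h2 : ‖fderiv ℝ X (φ t y)‖ ≤ M :=
      hM _ (hsub t ht (mem_closedBall_self (by norm_num)))
    have h3 : X (φ t (y + ξ)) - X (φ t y) - (fderiv ℝ X (φ t y)).comp (R t) ξ
      = fderiv ℝ X (φ t y) (φ t (y + ξ) - φ t y - R t ξ)
        + (X (φ t (y + ξ)) - X (φ t y) - fderiv ℝ X (φ t y) (φ t (y + ξ) - φ t y)) := by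
      simp only [ContinuousLinearMap.comp_apply, map_sub]; abel
    rw [h3]
    refine (norm_add_le _ _).trans (add_le_add ((fderiv ℝ X (φ t y)).le_of_opNorm_le h2 _) ?_)
    refine h1.trans ?_
    gcongr
    exact hl t ht

/-- continuous dependence of the linearized flow on the field and the initial condition -/
lemma aux_cont [ProperSpace E] [CompleteSpace E] {X : E → E} (hX : ContDiff ℝ 1 X)
    {φ : ℝ → E → E} (h0 : ∀ x, φ 0 x = x) (hφ : ∀ x t, HasDerivAt (fun s => φ s x) (X (φ t x)) t)
    (x : E) (T : ℝ) (hT : 0 ≤ T) :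
    ∃ K : Set E, IsCompact K ∧ ∀ ε > 0, ∃ δ > 0, ∀ (Y : E → E) (_ : ContDiff ℝ 1 Y)
      (ψ : ℝ → E → E) (_ : ∀ x, ψ 0 x = x)
      (_ : ∀ x t, HasDerivAt (fun s => ψ s x) (Y (ψ t x)) t) (y : E),
      ‖y - x‖ < δ → (∀ z ∈ K, ‖Y z - X z‖ ≤ δ) → (∀ z ∈ K, ‖fderiv ℝ Y z - fderiv ℝ X z‖ ≤ δ) →
      ‖fderiv ℝ (ψ T) y - fderiv ℝ (φ T) x‖ ≤ ε := by
  have hγ : Continuous fun t => φ t x :=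
    continuous_iff_continuousAt.2 fun t => (hφ x t).continuousAt
  obtain ⟨Kt, hKc, hsub, ⟨M, hM0, hM⟩, hunif⟩ := aux_tube hX hγ T
  obtain ⟨R, hR0, hR, hRf⟩ := aux_diff hX h0 hφ x T hT
  refine ⟨Kt, hKc, fun ε hε => ?_⟩
  obtain ⟨N0, hN0⟩ := (isCompact_Icc (a := (0:ℝ)) (b := T)).exists_bound_of_continuousOn
    (f := R) (fun t ht => (hR t ht).continuousAt.continuousWithinAt)
  set N := max N0 0 with hNd
  have hNn : 0 ≤ N := le_max_right _ _
  have hN : ∀ t ∈ Icc 0 T, ‖R t‖ ≤ N := fun t ht => (hN0 t ht).trans (le_max_left _ _)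
  set G := Real.exp ((M + 1 + 1) * T) with hG
  set G1 := Real.exp ((M + 1) * T) with hG1
  have hGp : 0 < G := Real.exp_pos _
  have hG1p : 0 < G1 := Real.exp_pos _
  -- e * N < η, η * G ≤ ε
  set e : ℝ := min 1 (ε / (4 * G * (N + 1))) with he
  have he0 : 0 < e := by positivity
  have he1 : e ≤ 1 := min_le_left _ _
  have heN : e * N < ε / (2 * G) := by
    have h1 : e * N ≤ ε / (4 * G * (N + 1)) * (N + 1) := by
      gcongr
      · exact min_le_right _ _
      · linarith
    have h2 : ε / (4 * G * (N + 1)) * (N + 1) = ε / (4 * G) := by field_simp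
    have h3 : ε / (4 * G) < ε / (2 * G) := by
      apply div_lt_div_of_pos_left hε (by positivity); linarith
    linarith
  obtain ⟨δ1, hδ1, hδ11, hun⟩ := hunif (e / 2) (by positivity)
  refine ⟨min (e / 2) (δ1 / (2 * G1)), by positivity, ?_⟩
  intro Y hY ψ hψ0 hψ y hy hYX hDYX
  set δ := min (e / 2) (δ1 / (2 * G1)) with hδd
  have hδ : 0 < δ := by positivity
  have hδG : 2 * δ * G1 ≤ δ1 := by
    have : δ ≤ δ1 / (2 * G1) := min_le_right _ _
    rw [le_div_iff₀ (by positivity)] at this; linarith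
  have hδe : δ ≤ e / 2 := min_le_left _ _
  obtain ⟨Q, hQ0, hQ, hQf⟩ := aux_diff hY hψ0 hψ y T hT
  have hTT : T ∈ Icc 0 T := ⟨hT, le_rfl⟩
  rw [(hQf T hTT).fderiv, (hRf T hTT).fderiv]
  have hclose : ∀ t ∈ Icc 0 T, ‖ψ t y - φ t x‖ ≤ 2 * δ * G1 := by
    refine aux_fence (f := fun t => ψ t y - φ t x)
      (f' := fun t => Y (ψ t y) - X (φ t x)) (K := M) (e := δ) (r := δ1)
      (fun t _ => (hψ _ t).sub (hφ _ t)) (by simp only [hψ0, h0]; linarith) (by linarith)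
      hM0 hδ.le hδG ?_
    intro t ht h1
    have h2 : ‖ψ t y - φ t x‖ ≤ 1 := h1.trans hδ11
    have h3 : ψ t y ∈ Kt := hsub t ht (by rwa [mem_closedBall, dist_eq_norm])
    have h4 := aux_lip hX (fun z hz => hM z (hsub t ht hz)) h2
    calc ‖Y (ψ t y) - X (φ t x)‖ = ‖(X (ψ t y) - X (φ t x)) + (Y (ψ t y) - X (ψ t y))‖ := by
          congr 1; abel
      _ ≤ _ := (norm_add_le _ _).trans (add_le_add h4 (hYX _ h3))
  have hA : ∀ t ∈ Icc 0 T, ‖fderiv ℝ Y (ψ t y) - fderiv ℝ X (φ t x)‖ ≤ e := by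
    intro t ht
    have h1 : ‖ψ t y - φ t x‖ ≤ δ1 := (hclose t ht).trans hδG
    have h3 : ψ t y ∈ Kt := hsub t ht (by
      rw [mem_closedBall, dist_eq_norm]; exact h1.trans hδ11)
    have h4 := hun t ht _ h1
    have h5 := hDYX _ h3
    calc ‖fderiv ℝ Y (ψ t y) - fderiv ℝ X (φ t x)‖
        = ‖(fderiv ℝ Y (ψ t y) - fderiv ℝ X (ψ t y))
          + (fderiv ℝ X (ψ t y) - fderiv ℝ X (φ t x))‖ := by congr 1; abel
      _ ≤ δ + e / 2 := (norm_add_le _ _).trans (add_le_add h5 h4)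
      _ ≤ e := by linarith
  have := aux_fence (f := fun t => Q t - R t)
    (f' := fun t => (fderiv ℝ Y (ψ t y)).comp (Q t) - (fderiv ℝ X (φ t x)).comp (R t))
    (T := T) (K := M + 1) (e := e * N) (η := ε / (2 * G)) (r := ε / (2 * G) * G)
    (fun t ht => (hQ t ht).sub (hR t ht)) (by simp [hQ0, hR0]; positivity) heN (by linarith)
    (by positivity) le_rfl ?_ T hTT
  · refine this.trans ?_
    rw [← hG]
    have : ε / (2 * G) * G = ε / 2 := by field_simp
    rw [this]; linarith
  · intro t ht _
    have h2 : ‖fderiv ℝ Y (ψ t y)‖ ≤ M + 1 := by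
      have h3 : ‖fderiv ℝ X (φ t x)‖ ≤ M :=
        hM _ (hsub t ht (mem_closedBall_self (by norm_num)))
      have := norm_le_norm_add_norm_sub' (fderiv ℝ Y (ψ t y)) (fderiv ℝ X (φ t x))
      linarith [hA t ht]
    have h3 : (fderiv ℝ Y (ψ t y)).comp (Q t) - (fderiv ℝ X (φ t x)).comp (R t)
      = (fderiv ℝ Y (ψ t y)).comp (Q t - R t)
        + (fderiv ℝ Y (ψ t y) - fderiv ℝ X (φ t x)).comp (R t) := by
      simp only [ContinuousLinearMap.comp_sub, ContinuousLinearMap.sub_comp]; abel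
    rw [h3]
    refine (norm_add_le _ _).trans (add_le_add ?_ ?_)
    · refine (ContinuousLinearMap.opNorm_comp_le _ _).trans ?_
      gcongr
    · refine (ContinuousLinearMap.opNorm_comp_le _ _).trans ?_
      gcongr
      · exact hA t ht
      · exact hN t ht

end ODEpart
section HamPart

variable {d : ℕ}

/-- the Riesz isomorphism as a continuous linear map -/
def sharpL (d : ℕ) : (Euc d →L[ℝ] ℝ) →L[ℝ] Euc d :=
  LinearMap.toContinuousLinearMap
    { toFun := fun l => (InnerProductSpace.toDual ℝ (Euc d)).symm l
      map_add' := fun l m => by simp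
      map_smul' := fun r l => by simp }

lemma sharpL_apply (l : Euc d →L[ℝ] ℝ) :
    sharpL d l = (InnerProductSpace.toDual ℝ (Euc d)).symm l := rfl

lemma inner_sharpL (l : Euc d →L[ℝ] ℝ) (v : Euc d) : ⟪sharpL d l, v⟫ = l v := by
  rw [sharpL_apply, InnerProductSpace.toDual_symm_apply]

/-- the symplectic gradient map -/
def hamJ (d : ℕ) : (Phase d →L[ℝ] ℝ) →L[ℝ] Phase d :=
  ((sharpL d).comp ((ContinuousLinearMap.compL ℝ (Euc d) (Phase d) ℝ).flip
      (ContinuousLinearMap.inr ℝ (Euc d) (Euc d)))).prod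
    (-((sharpL d).comp ((ContinuousLinearMap.compL ℝ (Euc d) (Phase d) ℝ).flip
      (ContinuousLinearMap.inl ℝ (Euc d) (Euc d)))))

lemma hamJ_apply (l : Phase d →L[ℝ] ℝ) :
    hamJ d l = (sharpL d (l.comp (ContinuousLinearMap.inr ℝ (Euc d) (Euc d))),
      -sharpL d (l.comp (ContinuousLinearMap.inl ℝ (Euc d) (Euc d)))) := rfl

/-- `x ↦ (0, p)` -/
def vproj (d : ℕ) : Phase d →L[ℝ] Phase d :=
  (ContinuousLinearMap.inr ℝ (Euc d) (Euc d)).comp (ContinuousLinearMap.snd ℝ (Euc d) (Euc d))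

lemma vproj_apply (x : Phase d) : vproj d x = (0, x.2) := rfl

/-- symplectic form -/
def symp (ξ ζ : Phase d) : ℝ := ⟪ξ.1, ζ.2⟫ - ⟪ξ.2, ζ.1⟫

lemma symp_hamJ (l : Phase d →L[ℝ] ℝ) (ζ : Phase d) : symp (hamJ d l) ζ = l ζ := by
  have : ζ = (0, ζ.2) + (ζ.1, 0) := by ext <;> simp
  conv_rhs => rw [this, map_add]
  simp only [symp, hamJ_apply, inner_neg_left, inner_sharpL]
  simp

lemma symp_comm (ξ ζ : Phase d) : symp ξ ζ = - symp ζ ξ := by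
  simp only [symp, real_inner_comm]; ring

lemma hasFDerivAt_slice_right {F : Type*} [NormedAddCommGroup F] [NormedSpace ℝ F]
    {f : Phase d → F} {f' : Phase d →L[ℝ] F} {q p : Euc d}
    (h : HasFDerivAt f f' (q, p)) :
    HasFDerivAt (fun p' => f (q, p')) (f'.comp (ContinuousLinearMap.inr ℝ (Euc d) (Euc d))) p :=
  HasFDerivAt.comp (g := f) p h (hasFDerivAt_prodMk_right q p)

lemma hasFDerivAt_slice_left {F : Type*} [NormedAddCommGroup F] [NormedSpace ℝ F]
    {f : Phase d → F} {f' : Phase d →L[ℝ] F} {q p : Euc d}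
    (h : HasFDerivAt f f' (q, p)) :
    HasFDerivAt (fun q' => f (q', p)) (f'.comp (ContinuousLinearMap.inl ℝ (Euc d) (Euc d))) q :=
  HasFDerivAt.comp (g := f) q h (hasFDerivAt_prodMk_left q p)

lemma hamVF_eq {H : Phase d → ℝ} (hH : ContDiff ℝ 2 H) (lam : ℝ) :
    hamVF H lam = fun x => hamJ d (fderiv ℝ H x) - lam • vproj d x := by
  funext x
  obtain ⟨q, p⟩ := x
  have hd : HasFDerivAt H (fderiv ℝ H (q, p)) (q, p) :=
    ((hH.differentiable (by norm_num)) _).hasFDerivAt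
  simp only [hamVF, gradient, (hasFDerivAt_slice_right hd).fderiv,
    (hasFDerivAt_slice_left hd).fderiv, hamJ_apply, vproj_apply, sharpL_apply]
  ext <;> simp

/-- linearized field -/
def hamDX (H : Phase d → ℝ) (lam : ℝ) (x : Phase d) : Phase d →L[ℝ] Phase d :=
  (hamJ d).comp (fderiv ℝ (fderiv ℝ H) x) - lam • vproj d

lemma contDiff_fderiv_one {H : Phase d → ℝ} (hH : ContDiff ℝ 2 H) :
    ContDiff ℝ 1 (fderiv ℝ H) := hH.fderiv_right (by norm_num)

lemma hamVF_contDiff {H : Phase d → ℝ} (hH : ContDiff ℝ 2 H) (lam : ℝ) :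
    ContDiff ℝ 1 (hamVF H lam) := by
  rw [hamVF_eq hH]
  exact ((hamJ d).contDiff.comp (contDiff_fderiv_one hH)).sub
    ((vproj d).contDiff.const_smul lam)

lemma hamVF_fderiv {H : Phase d → ℝ} (hH : ContDiff ℝ 2 H) (lam : ℝ) (x : Phase d) :
    fderiv ℝ (hamVF H lam) x = hamDX H lam x := by
  rw [hamVF_eq hH]
  have h1 : HasFDerivAt (fderiv ℝ H) (fderiv ℝ (fderiv ℝ H) x) x :=
    (((contDiff_fderiv_one hH).differentiable (by norm_num)) x).hasFDerivAt
  have h2 := (hamJ d).hasFDerivAt.comp x h1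
  exact (h2.sub ((vproj d).hasFDerivAt.const_smul lam)).fderiv

lemma symp_hamDX {H : Phase d → ℝ} (hH : ContDiff ℝ 2 H) (lam : ℝ) (x ξ ζ : Phase d) :
    symp (hamDX H lam x ξ) ζ + symp ξ (hamDX H lam x ζ) = -lam * symp ξ ζ := by
  have hs : fderiv ℝ (fderiv ℝ H) x ξ ζ = fderiv ℝ (fderiv ℝ H) x ζ ξ :=
    (hH.contDiffAt.isSymmSndFDerivAt (by simp)) ξ ζ
  have e1 : ∀ ξ ζ, symp (hamDX H lam x ξ) ζ
      = fderiv ℝ (fderiv ℝ H) x ξ ζ + lam * ⟪ξ.2, ζ.1⟫ := by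
    intro ξ ζ
    rw [← symp_hamJ (fderiv ℝ (fderiv ℝ H) x ξ) ζ]
    simp only [hamDX, symp, _root_.sub_apply, ContinuousLinearMap.comp_apply,
      _root_.smul_apply, vproj_apply, Prod.fst_sub, Prod.snd_sub, Prod.smul_fst,
      Prod.smul_snd, inner_sub_left, real_inner_smul_left]
    simp
    ring
  rw [symp_comm ξ, e1, e1, hs]
  simp only [symp, real_inner_comm]
  ring

lemma hess_nonneg {H : Phase d → ℝ} (hH : ContDiff ℝ 2 H) (hc : ConvexInFiber H) (lam : ℝ)
    (x : Phase d) (w : Euc d) : 0 ≤ ⟪(hamDX H lam x (0, w)).1, w⟫ := by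
  obtain ⟨q, p⟩ := x
  have e0 : ⟪(hamDX H lam (q, p) (0, w)).1, w⟫
      = fderiv ℝ (fderiv ℝ H) (q, p) (0, w) (0, w) := by
    simp only [hamDX, _root_.sub_apply, ContinuousLinearMap.comp_apply,
      _root_.smul_apply, vproj_apply, Prod.fst_sub, Prod.smul_fst, hamJ_apply,
      inner_sub_left, inner_sharpL]
    simp
  rcases eq_or_ne w 0 with rfl | hw
  · simp
  have h := hc q p w hw
  rw [iteratedFDeriv_two_apply] at h
  have e1 : fderiv ℝ (fun p' => H (q, p')) = fun p' => (fderiv ℝ H (q, p')).comp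
      (ContinuousLinearMap.inr ℝ (Euc d) (Euc d)) := by
    funext p'
    exact (hasFDerivAt_slice_right ((hH.differentiable (by norm_num)) _).hasFDerivAt).fderiv
  have h1 : HasFDerivAt (fderiv ℝ H) (fderiv ℝ (fderiv ℝ H) (q, p)) (q, p) :=
    (((contDiff_fderiv_one hH).differentiable (by norm_num)) _).hasFDerivAt
  have h2 := ((ContinuousLinearMap.compL ℝ (Euc d) (Phase d) ℝ).flip
      (ContinuousLinearMap.inr ℝ (Euc d) (Euc d))).hasFDerivAt.comp p (hasFDerivAt_slice_right h1)
  have e2 := h2.fderiv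
  change fderiv ℝ (fun p' => (fderiv ℝ H (q, p')).comp
      (ContinuousLinearMap.inr ℝ (Euc d) (Euc d))) p = _ at e2
  rw [e1, e2] at h
  rw [e0]
  simpa using h.le

lemma hasDerivAt_symp {u v : ℝ → Phase d} {u' v' : Phase d} {t : ℝ}
    (hu : HasDerivAt u u' t) (hv : HasDerivAt v v' t) :
    HasDerivAt (fun s => symp (u s) (v s)) (symp u' (v t) + symp (u t) v') t := by
  have hu1 := (ContinuousLinearMap.fst ℝ (Euc d) (Euc d)).hasFDerivAt.comp_hasDerivAt t hu
  have hu2 := (ContinuousLinearMap.snd ℝ (Euc d) (Euc d)).hasFDerivAt.comp_hasDerivAt t hu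
  have hv1 := (ContinuousLinearMap.fst ℝ (Euc d) (Euc d)).hasFDerivAt.comp_hasDerivAt t hv
  have hv2 := (ContinuousLinearMap.snd ℝ (Euc d) (Euc d)).hasFDerivAt.comp_hasDerivAt t hv
  have := (hu1.inner ℝ hv2).sub (hu2.inner ℝ hv1)
  refine this.congr_deriv ?_
  simp only [symp, Function.comp, ContinuousLinearMap.coe_fst', ContinuousLinearMap.coe_snd']
  ring

lemma flow_facts {H : Phase d → ℝ} (hH : ContDiff ℝ 2 H) {lam : ℝ} {φ : ℝ → Phase d → Phase d}
    (hφ : IsConformalFlow H lam φ) (y : Phase d) (T : ℝ) (hT : 0 ≤ T) :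
    ∃ R : ℝ → Phase d →L[ℝ] Phase d,
      (∀ t ∈ Icc 0 T, HasDerivAt R ((hamDX H lam (φ t y)).comp (R t)) t) ∧
      (∀ t ∈ Icc 0 T, fderiv ℝ (φ t) y = R t) ∧
      (∀ t ∈ Icc 0 T, ∀ ξ ζ, symp (R t ξ) (R t ζ) = Real.exp (-(lam * t)) * symp ξ ζ) ∧
      ∀ t ∈ Icc 0 T, (∀ ξ, fderiv ℝ (φ (-t)) (φ t y) (R t ξ) = ξ) ∧
        ∀ ξ, R t (fderiv ℝ (φ (-t)) (φ t y) ξ) = ξ := by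
  obtain ⟨h0, hgrp, hder⟩ := hφ
  have hX := hamVF_contDiff hH lam
  obtain ⟨R, hR0, hR, hRf⟩ := aux_diff hX h0 hder y T hT
  simp only [hamVF_fderiv hH] at hR
  refine ⟨R, hR, fun t ht => (hRf t ht).fderiv, ?_, ?_⟩
  · intro t ht ξ ζ
    have hd : ∀ s ∈ Icc 0 T, HasDerivAt
        (fun s => Real.exp (lam * s) * symp (R s ξ) (R s ζ)) 0 s := by
      intro s hs
      have e1 : ∀ ξ, HasDerivAt (fun s => R s ξ) (hamDX H lam (φ s y) (R s ξ)) s := fun ξ =>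
        (hR s hs).clm_apply (hasDerivAt_const s ξ) |>.congr_deriv (by simp)
      have e2 : HasDerivAt (fun s : ℝ => Real.exp (lam * s)) (Real.exp (lam * s) * (lam * 1)) s :=
        ((hasDerivAt_id s).const_mul lam).exp
      refine (e2.mul (hasDerivAt_symp (e1 ξ) (e1 ζ))).congr_deriv ?_
      rw [symp_hamDX hH]; ring
    have hc := constant_of_has_deriv_right_zero
      (fun s hs => (hd s hs).continuousAt.continuousWithinAt)
      (fun s hs => (hd s ⟨hs.1, hs.2.le⟩).hasDerivWithinAt) t ht
    simp only [hR0, mul_zero, Real.exp_zero, one_mul, ContinuousLinearMap.id_apply] at hc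
    rw [← hc, ← mul_assoc, ← Real.exp_add]
    simp
  · intro t ht
    -- reversed flow
    have hrev := aux_diff (X := fun z => - hamVF H lam z) (φ := fun s => φ (-s)) hX.neg
      (by simpa using h0) (by
        intro z s
        have h1 := (hder z (-s)).scomp s ((hasDerivAt_id s).neg)
        refine h1.congr_deriv ?_
        simp) (φ t y) t ht.1
    obtain ⟨Q, -, -, hQ⟩ := hrev
    have hQt := hQ t ⟨ht.1, le_rfl⟩
    rw [hQt.fderiv]
    have c1 : HasFDerivAt (φ (-t) ∘ φ t) ((Q t).comp (R t)) y := hQt.comp y (hRf t ht)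
    have e1 : φ (-t) ∘ φ t = id := by funext z; simp [hgrp, h0]
    have e2 : φ t ∘ φ (-t) = id := by funext z; simp [hgrp, h0]
    have hb : φ (-t) (φ t y) = y := congrFun e1 y
    have c2 : HasFDerivAt (φ t ∘ φ (-t)) ((R t).comp (Q t)) (φ t y) := by
      refine HasFDerivAt.comp (φ t y) ?_ hQt
      rw [hb]; exact hRf t ht
    rw [e1] at c1
    rw [e2] at c2
    have u1 := c1.unique (hasFDerivAt_id y)
    have u2 := c2.unique (hasFDerivAt_id (φ t y))
    exact ⟨fun ξ => DFunLike.congr_fun u1 ξ, fun ξ => DFunLike.congr_fun u2 ξ⟩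

/-- upper left block -/
def blkA (d : ℕ) : (Phase d →L[ℝ] Phase d) →L[ℝ] (Euc d →L[ℝ] Euc d) :=
  (ContinuousLinearMap.compL ℝ (Euc d) (Phase d) (Euc d)
      (ContinuousLinearMap.fst ℝ (Euc d) (Euc d))).comp
    ((ContinuousLinearMap.compL ℝ (Euc d) (Phase d) (Phase d)).flip
      (ContinuousLinearMap.inl ℝ (Euc d) (Euc d)))

/-- upper right block -/
def blkB (d : ℕ) : (Phase d →L[ℝ] Phase d) →L[ℝ] (Euc d →L[ℝ] Euc d) :=
  (ContinuousLinearMap.compL ℝ (Euc d) (Phase d) (Euc d)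
      (ContinuousLinearMap.fst ℝ (Euc d) (Euc d))).comp
    ((ContinuousLinearMap.compL ℝ (Euc d) (Phase d) (Phase d)).flip
      (ContinuousLinearMap.inr ℝ (Euc d) (Euc d)))

lemma blkA_apply (R : Phase d →L[ℝ] Phase d) (v : Euc d) : blkA d R v = (R (v, 0)).1 := rfl
lemma blkB_apply (R : Phase d →L[ℝ] Phase d) (v : Euc d) : blkB d R v = (R (0, v)).1 := rfl

/-- height of the preimage of the vertical -/
def hh (R : Phase d →L[ℝ] Phase d) : Euc d →L[ℝ] Euc d :=
  -(Ring.inverse (blkB d R) * blkA d R)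

lemma fst_blk (R : Phase d →L[ℝ] Phase d) (v w : Euc d) :
    (R (v, w)).1 = blkA d R v + blkB d R w := by
  have : ((v, w) : Phase d) = (v, 0) + (0, w) := by ext <;> simp
  rw [this, map_add, blkA_apply, blkB_apply]; rfl

lemma fst_hh {R : Phase d →L[ℝ] Phase d} (hb : IsUnit (blkB d R)) (v w : Euc d) :
    (R (v, w)).1 = 0 ↔ w = hh R v := by
  have i1 : ∀ w, Ring.inverse (blkB d R) (blkB d R w) = w := fun w =>
    DFunLike.congr_fun (Ring.inverse_mul_cancel _ hb) w
  have i2 : ∀ w, blkB d R (Ring.inverse (blkB d R) w) = w := fun w =>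
    DFunLike.congr_fun (Ring.mul_inverse_cancel _ hb) w
  have e : hh R v = - Ring.inverse (blkB d R) (blkA d R v) := rfl
  rw [fst_blk, e]
  constructor
  · intro h
    have : blkB d R w = - blkA d R v := by rw [eq_neg_iff_add_eq_zero, add_comm]; exact h
    rw [← i1 w, this, map_neg]
  · rintro rfl
    rw [map_neg, i2]; simp

lemma heightOf_eq {G : Submodule ℝ (Phase d)} {S : Euc d →L[ℝ] Euc d} (h : IsHeight G S) :
    heightOf G = S := by
  have hex : ∃ S, IsHeight G S := ⟨S, h⟩
  have h1 : IsHeight G (heightOf G) := by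
    unfold heightOf; rw [dif_pos hex]; exact hex.choose_spec
  ext1 v
  have : (v, heightOf G v) ∈ LinearMap.graph (S : Euc d →ₗ[ℝ] Euc d) := by
    rw [← h1.2.symm.trans h.2]; simp [LinearMap.mem_graph_iff]
  simpa [LinearMap.mem_graph_iff] using this

lemma mem_Vert (ξ : Phase d) : ξ ∈ Vert d ↔ ξ.1 = 0 := by
  simp [Vert, Submodule.mem_prod]

lemma isUnit_blkB {φ : ℝ → Phase d → Phase d} {t : ℝ} {y : Phase d} {R Q : Phase d →L[ℝ] Phase d}
    (hR : fderiv ℝ (φ t) y = R) (hQ : ∀ ξ, Q (R ξ) = ξ)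
    (hn : pushV φ t y ⊓ Vert d = ⊥) : IsUnit (blkB d R) := by
  have hinj : Function.Injective (blkB d R) := by
    rw [injective_iff_map_eq_zero]
    intro w hw
    have hm : R (0, w) ∈ pushV φ t y ⊓ Vert d := by
      refine ⟨?_, (mem_Vert _).2 hw⟩
      rw [pushV, hR]
      exact ⟨(0, w), (mem_Vert _).2 rfl, rfl⟩
    rw [hn, Submodule.mem_bot] at hm
    have := hQ (0, w)
    rw [hm, map_zero] at this
    exact (congrArg Prod.snd this).symm
  rw [ContinuousLinearMap.isUnit_iff_bijective]
  exact ⟨hinj, (LinearMap.injective_iff_surjective (f := (blkB d R).toLinearMap)).1 hinj⟩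

lemma isHeight_hh {φ : ℝ → Phase d → Phase d} {t a : ℝ} {y : Phase d}
    {R Q : Phase d →L[ℝ] Phase d}
    (hQ : fderiv ℝ (φ (-t)) (φ t y) = Q) (h1 : ∀ ξ, Q (R ξ) = ξ) (h2 : ∀ ξ, R (Q ξ) = ξ)
    (ha : a ≠ 0) (hs : ∀ ξ ζ, symp (R ξ) (R ζ) = a * symp ξ ζ) (hb : IsUnit (blkB d R)) :
    IsHeight (pushV φ (-t) (φ t y)) (hh R) := by
  constructor
  · intro v w
    have e := hs (v, hh R v) (w, hh R w)
    have z : symp (R (v, hh R v)) (R (w, hh R w)) = 0 := by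
      simp only [symp, (fst_hh hb v _).2 rfl, (fst_hh hb w _).2 rfl]; simp
    rw [z] at e
    have := (mul_eq_zero.1 e.symm).resolve_left ha
    simp only [symp] at this
    linarith
  · rw [pushV, hQ]
    ext ⟨v, w⟩
    rw [LinearMap.mem_graph_iff]
    change _ ↔ w = hh R v
    rw [← fst_hh hb]
    constructor
    · rintro ⟨ξ, hξ, he⟩
      have he : Q ξ = (v, w) := he
      rw [← he, h2]; exact (mem_Vert _).1 hξ
    · intro h
      exact ⟨R (v, w), (mem_Vert _).2 h, h1 _⟩

lemma height_facts {H : Phase d → ℝ} (hH : ContDiff ℝ 2 H) {lam : ℝ}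
    {φ : ℝ → Phase d → Phase d} (hφ : IsConformalFlow H lam φ) {y : Phase d} {t : ℝ} (ht : 0 < t)
    (hn : NoConjPts φ y (uIcc 0 t)) :
    IsUnit (blkB d (fderiv ℝ (φ t) y)) ∧ hGreenMinus φ t y = hh (fderiv ℝ (φ t) y) := by
  obtain ⟨R, -, hRf, hs, hinv⟩ := flow_facts hH hφ y t ht.le
  have htt : t ∈ Icc 0 t := ⟨ht.le, le_rfl⟩
  have hpv : pushV φ t y ⊓ Vert d = ⊥ := by
    have := hn 0 left_mem_uIcc t right_mem_uIcc ht.ne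
    simpa [hφ.1] using this
  have hb : IsUnit (blkB d (R t)) := isUnit_blkB (hRf t htt) (hinv t htt).1 hpv
  rw [hRf t htt]
  exact ⟨hb, heightOf_eq (isHeight_hh rfl (hinv t htt).1 (hinv t htt).2
    (Real.exp_pos _).ne' (hs t htt) hb)⟩

lemma noConj_mono {φ : ℝ → Phase d → Phase d} {y : Phase d} {s t : ℝ} (hs : 0 ≤ s) (hst : s ≤ t)
    (hn : NoConjPts φ y (uIcc 0 t)) : NoConjPts φ y (uIcc 0 s) := by
  have : uIcc 0 s ⊆ uIcc 0 t := by
    rw [uIcc_of_le hs, uIcc_of_le (hs.trans hst)]; exact Icc_subset_Icc_right hst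
  exact fun a ha b hb => hn a (this ha) b (this hb)

lemma hGreen_mono {H : Phase d → ℝ} (hH : ContDiff ℝ 2 H) (hc : ConvexInFiber H) {lam : ℝ}
    {φ : ℝ → Phase d → Phase d} (hφ : IsConformalFlow H lam φ) {y : Phase d} {s t : ℝ}
    (hs : 0 < s) (hst : s ≤ t) (hn : NoConjPts φ y (uIcc 0 t)) :
    SymLE (hGreenMinus φ s y) (hGreenMinus φ t y) := by
  intro v
  have ht : 0 < t := hs.trans_le hst
  obtain ⟨R, hR, hRf, hsy, -⟩ := flow_facts hH hφ y t ht.le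
  have hf : ∀ τ ∈ Icc s t, IsUnit (blkB d (R τ)) ∧ hGreenMinus φ τ y = hh (R τ) := by
    intro τ hτ
    have h0 : 0 < τ := hs.trans_le hτ.1
    have := height_facts hH hφ h0 (noConj_mono h0.le hτ.2 hn)
    rwa [hRf τ ⟨h0.le, hτ.2⟩] at this
  rw [(hf s ⟨le_rfl, hst⟩).2, (hf t ⟨hst, le_rfl⟩).2]
  have hI : ∀ τ ∈ Icc s t, τ ∈ Icc 0 t := fun τ hτ => ⟨hs.le.trans hτ.1, hτ.2⟩
  have hdiff : ∀ τ ∈ Icc s t, DifferentiableAt ℝ (fun τ => hh (R τ)) τ := by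
    intro τ hτ
    have hRd : DifferentiableAt ℝ R τ := (hR τ (hI τ hτ)).differentiableAt
    have hB : DifferentiableAt ℝ (fun τ => blkB d (R τ)) τ :=
      (blkB d).differentiableAt.comp τ hRd
    have hA : DifferentiableAt ℝ (fun τ => blkA d (R τ)) τ :=
      (blkA d).differentiableAt.comp τ hRd
    obtain ⟨u, hu⟩ := (hf τ hτ).1
    have hinv : DifferentiableAt ℝ (Ring.inverse : (Euc d →L[ℝ] Euc d) → _) (blkB d (R τ)) := by
      rw [← hu]; exact (hasFDerivAt_ringInverse (𝕜 := ℝ) u).differentiableAt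
    exact ((hinv.comp τ hB).mul hA).neg
  have hder : ∀ τ ∈ Icc s t, HasDerivAt (fun τ => ⟪hh (R τ) v, v⟫)
      ⟪deriv (fun τ => hh (R τ)) τ v, v⟫ τ := by
    intro τ hτ
    have h1 := (hdiff τ hτ).hasDerivAt.clm_apply (hasDerivAt_const τ v)
    refine (h1.inner ℝ (hasDerivAt_const τ v)).congr_deriv ?_
    simp
  have hmono : MonotoneOn (fun τ => ⟪hh (R τ) v, v⟫) (Icc s t) := by
    refine monotoneOn_of_deriv_nonneg (convex_Icc s t)
      (fun τ hτ => (hder τ hτ).continuousAt.continuousWithinAt) ?_ ?_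
    · intro τ hτ
      exact (hder τ (interior_subset hτ)).differentiableAt.differentiableWithinAt
    · intro τ hτ
      have hτ' := interior_subset hτ
      rw [(hder τ hτ').deriv]
      set h' := deriv (fun τ => hh (R τ)) τ v with hh'
      have h1 : HasDerivAt (fun τ => hh (R τ) v) h' τ :=
        ((hdiff τ hτ').hasDerivAt.clm_apply (hasDerivAt_const τ v)).congr_deriv (by simp [hh'])
      have h2 : HasDerivAt (fun τ => ((v, hh (R τ) v) : Phase d)) (0, h') τ :=
        (hasDerivAt_const τ v).prodMk h1
      have h3 := (hR τ (hI τ hτ')).clm_apply h2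
      have h4 := (ContinuousLinearMap.fst ℝ (Euc d) (Euc d)).hasFDerivAt.comp_hasDerivAt τ h3
      have h5 : HasDerivAt (⇑(ContinuousLinearMap.fst ℝ (Euc d) (Euc d)) ∘
          fun τ => R τ (v, hh (R τ) v)) 0 τ := by
        refine (hasDerivAt_const τ (0 : Euc d)).congr_of_eventuallyEq ?_
        filter_upwards [isOpen_interior.mem_nhds hτ] with σ hσ
        exact (fst_hh (hf σ (interior_subset hσ)).1 v _).2 rfl
      have h6 := h4.unique h5
      set w := (R τ (v, hh (R τ) v)).2 with hw
      have h7 : R τ (v, hh (R τ) v) = (0, w) := by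
        ext1
        · exact (fst_hh (hf τ hτ').1 v _).2 rfl
        · rfl
      have h8 : (R τ (0, h')).1 = - (hamDX H lam (φ τ y) (0, w)).1 := by
        rw [eq_neg_iff_add_eq_zero, add_comm]
        rw [← h7]
        exact h6
      have h9 := hsy τ (hI τ hτ') (v, hh (R τ) v) (0, h')
      rw [h7] at h9
      simp only [symp, h8] at h9
      have h10 := hess_nonneg hH hc lam (φ τ y) w
      rw [real_inner_comm] at h10
      simp only [inner_zero_left, inner_neg_right, inner_zero_right, sub_zero, zero_sub,
        neg_neg] at h9
      rw [h9] at h10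
      rw [real_inner_comm]
      exact nonneg_of_mul_nonneg_right h10 (Real.exp_pos _)
  exact hmono ⟨le_rfl, hst⟩ ⟨hst, le_rfl⟩ hst

lemma hh_continuousAt {R : Phase d →L[ℝ] Phase d} (hb : IsUnit (blkB d R)) :
    ContinuousAt hh R := by
  obtain ⟨u, hu⟩ := hb
  have hinv : ContinuousAt (Ring.inverse : (Euc d →L[ℝ] Euc d) → _) (blkB d R) := by
    rw [← hu]; exact NormedRing.inverse_continuousAt u
  have h1 : ContinuousAt (fun R => Ring.inverse (blkB d R)) R :=
    ContinuousAt.comp (g := Ring.inverse) hinv (blkB d).continuous.continuousAt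
  exact (h1.mul (blkA d).continuous.continuousAt).neg

lemma field_close {H H' : Phase d → ℝ} (hH : ContDiff ℝ 2 H) (hH' : ContDiff ℝ 2 H')
    (z : Phase d) {e : ℝ}
    (h : ∀ j : ℕ, j ≤ 2 → ‖iteratedFDeriv ℝ j H' z - iteratedFDeriv ℝ j H z‖ ≤ e) :
    ‖fderiv ℝ H' z - fderiv ℝ H z‖ ≤ e ∧
      ‖fderiv ℝ (fderiv ℝ H') z - fderiv ℝ (fderiv ℝ H) z‖ ≤ e := by
  have e1 : fderiv ℝ (H' - H) = fderiv ℝ H' - fderiv ℝ H := by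
    funext x
    exact fderiv_sub (hH'.differentiable (by norm_num) x) (hH.differentiable (by norm_num) x)
  have e2 : fderiv ℝ (fderiv ℝ H' - fderiv ℝ H) z
      = fderiv ℝ (fderiv ℝ H') z - fderiv ℝ (fderiv ℝ H) z :=
    fderiv_sub ((contDiff_fderiv_one hH').differentiable (by norm_num) z)
      ((contDiff_fderiv_one hH).differentiable (by norm_num) z)
  have s : ∀ j : ℕ, j ≤ 2 → iteratedFDeriv ℝ j (H' - H) z
      = iteratedFDeriv ℝ j H' z - iteratedFDeriv ℝ j H z := by
    intro j hj
    have hj' : (j : WithTop ℕ∞) ≤ 2 := by exact_mod_cast hj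
    exact iteratedFDeriv_sub_apply (hH'.of_le hj').contDiffAt (hH.of_le hj').contDiffAt
  constructor
  · have := h 1 (by norm_num)
    rw [← s 1 (by norm_num), ← norm_iteratedFDeriv_fderiv, norm_iteratedFDeriv_zero, e1] at this
    exact this
  · have := h 2 le_rfl
    rw [← s 2 le_rfl, ← norm_iteratedFDeriv_fderiv, ← norm_iteratedFDeriv_fderiv,
      norm_iteratedFDeriv_zero, e1, e2] at this
    exact this

end HamPart

/-- **Proposition (lower semicontinuity of `h₋`).** For a continuous family `c ↦ H_c` of
`C²`-convex-in-the-fiber Hamiltonians, `(x, c₀, λ₀) ∈ 𝒰₊^∞` and `ε > 0`, there are a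
neighborhood `𝒩₋` of `(x, c₀, λ₀)` and `T > 0` such that `h(t,y,c,λ) ≥ h₋(x,c₀,λ₀) - ε·Id`
for `(t,y,c,λ) ∈ 𝒰₊` with `(y,c,λ) ∈ 𝒩₋`, `t ≥ T`, and `h₋(y,c,λ) ≥ h₋(x,c₀,λ₀) - ε·Id`
for `(y,c,λ) ∈ 𝒩₋ ∩ 𝒰₊^∞`. -/
theorem stmt_11 {d : ℕ} {C : Type*} [MetricSpace C]
    (Hfam : C → Phase d → ℝ)
    (hsm : ∀ c, ContDiff ℝ 2 (Hfam c)) (hcvx : ∀ c, ConvexInFiber (Hfam c))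
    (hper : ∀ c, PerPhase (Hfam c)) (hcont : C2CompactOpenCont Hfam)
    (φfam : C → ℝ → ℝ → Phase d → Phase d)
    (hflow : ∀ c lam, IsConformalFlow (Hfam c) lam (φfam c lam))
    (x : Phase d) (c0 : C) (lam0 : ℝ)
    (hUinf : ∀ t : ℝ, 0 ≤ t → NoConjPts (φfam c0 lam0) x (uIcc 0 t))
    (S0 : Euc d →L[ℝ] Euc d)
    (hS0 : Tendsto (fun t => hGreenMinus (φfam c0 lam0) t x) atTop (nhds S0))
    (ε : ℝ) (hε : 0 < ε) :
    ∃ δ > (0:ℝ), ∃ T > (0:ℝ),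
      (∀ (y : Phase d) (c : C) (lam t : ℝ),
        dist y x < δ → dist c c0 < δ → |lam - lam0| < δ → T ≤ t →
        NoConjPts (φfam c lam) y (uIcc 0 t) →
        SymLE (S0 - ε • ContinuousLinearMap.id ℝ (Euc d)) (hGreenMinus (φfam c lam) t y)) ∧
      (∀ (y : Phase d) (c : C) (lam : ℝ),
        dist y x < δ → dist c c0 < δ → |lam - lam0| < δ →
        (∀ t : ℝ, 0 ≤ t → NoConjPts (φfam c lam) y (uIcc 0 t)) →
        ∀ S : Euc d →L[ℝ] Euc d,
          Tendsto (fun t => hGreenMinus (φfam c lam) t y) atTop (nhds S) →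
          SymLE (S0 - ε • ContinuousLinearMap.id ℝ (Euc d)) S) := by
  -- choice of `T`
  obtain ⟨T, hT1, hTS⟩ : ∃ T : ℝ, 1 ≤ T ∧ ‖hGreenMinus (φfam c0 lam0) T x - S0‖ < ε / 2 := by
    have h1 := (Metric.tendsto_nhds.1 hS0) (ε / 2) (by positivity)
    obtain ⟨T, hT⟩ := (h1.and (eventually_ge_atTop (1:ℝ))).exists
    exact ⟨T, hT.2, by rw [← dist_eq_norm]; exact hT.1⟩
  have hT0 : 0 < T := by linarith
  obtain ⟨hu0, hg0⟩ := height_facts (hsm c0) (hflow c0 lam0) hT0 (hUinf T hT0.le)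
  obtain ⟨δ1, hδ1, hcont1⟩ := (Metric.continuousAt_iff.1 (hh_continuousAt hu0)) (ε / 2)
    (by positivity)
  obtain ⟨K, hK, hKc⟩ := aux_cont (hamVF_contDiff (hsm c0) lam0) (hflow c0 lam0).1
    (hflow c0 lam0).2.2 x T hT0.le
  obtain ⟨δ2, hδ2, hmain⟩ := hKc (δ1 / 2) (by positivity)
  obtain ⟨B0, hB0⟩ := hK.exists_bound_of_continuousOn (f := fun z : Phase d => z) continuousOn_id
  set B : ℝ := max B0 1 with hBd
  have hB1 : 1 ≤ B := le_max_right _ _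
  have hB : ∀ z ∈ K, ‖z‖ ≤ B := fun z hz => (hB0 z hz).trans (le_max_left _ _)
  set nJ : ℝ := ‖hamJ d‖ with hnJ
  set nV : ℝ := ‖vproj d‖ with hnV
  have hnJ0 : 0 ≤ nJ := norm_nonneg (hamJ d)
  have hnV0 : 0 ≤ nV := norm_nonneg (vproj d)
  set e : ℝ := δ2 / (2 * (nJ + 1)) with he
  have he0 : 0 < e := by positivity
  set δ4 : ℝ := δ2 / (2 * (nV * B + 1)) with hδ4
  have hδ40 : 0 < δ4 := by positivity
  have hsum : nJ * e + δ4 * nV * B ≤ δ2 := by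
    have h1 : nJ * e ≤ δ2 / 2 := by
      have : (nJ + 1) * e = δ2 / 2 := by rw [he]; field_simp
      linarith
    have h2 : δ4 * nV * B ≤ δ2 / 2 := by
      have : δ4 * (nV * B + 1) = δ2 / 2 := by rw [hδ4]; field_simp
      linarith
    linarith
  obtain ⟨δ3, hδ3, hHc⟩ := hcont c0 K hK e he0
  have hpartA : ∀ (y : Phase d) (c : C) (lam t : ℝ),
        dist y x < min δ2 (min δ3 δ4) → dist c c0 < min δ2 (min δ3 δ4) →
        |lam - lam0| < min δ2 (min δ3 δ4) → T ≤ t →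
        NoConjPts (φfam c lam) y (uIcc 0 t) →
        SymLE (S0 - ε • ContinuousLinearMap.id ℝ (Euc d)) (hGreenMinus (φfam c lam) t y) := by
    intro y c lam t hy hc hl ht hn
    have hc3 : dist c c0 < δ3 := hc.trans_le ((min_le_right _ _).trans (min_le_left _ _))
    have hl4 : |lam - lam0| ≤ δ4 := hl.le.trans ((min_le_right _ _).trans (min_le_right _ _))
    have hcl : ∀ z ∈ K, ‖fderiv ℝ (Hfam c) z - fderiv ℝ (Hfam c0) z‖ ≤ e ∧
        ‖fderiv ℝ (fderiv ℝ (Hfam c)) z - fderiv ℝ (fderiv ℝ (Hfam c0)) z‖ ≤ e := fun z hz =>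
      field_close (hsm c0) (hsm c) z fun j hj => hHc c hc3 j hj z hz
    have hclose : ‖fderiv ℝ (φfam c lam T) y - fderiv ℝ (φfam c0 lam0 T) x‖ ≤ δ1 / 2 := by
      refine hmain (hamVF (Hfam c) lam) (hamVF_contDiff (hsm c) lam) (φfam c lam)
        (hflow c lam).1 (hflow c lam).2.2 y ?_ ?_ ?_
      · rw [← dist_eq_norm]; exact hy.trans_le (min_le_left _ _)
      · intro z hz
        rw [hamVF_eq (hsm c), hamVF_eq (hsm c0)]
        have e1 : hamJ d (fderiv ℝ (Hfam c) z) - lam • vproj d z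
            - (hamJ d (fderiv ℝ (Hfam c0) z) - lam0 • vproj d z)
            = hamJ d (fderiv ℝ (Hfam c) z - fderiv ℝ (Hfam c0) z)
              - (lam - lam0) • vproj d z := by
          rw [map_sub, sub_smul]; abel
        change ‖hamJ d (fderiv ℝ (Hfam c) z) - lam • vproj d z
            - (hamJ d (fderiv ℝ (Hfam c0) z) - lam0 • vproj d z)‖ ≤ _
        rw [e1]
        refine (norm_sub_le _ _).trans (le_trans ?_ hsum)
        refine add_le_add (((hamJ d).le_opNorm _).trans ?_) ?_
        · gcongr; exact (hcl z hz).1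
        · rw [norm_smul, Real.norm_eq_abs, mul_assoc]
          gcongr
          refine ((vproj d).le_opNorm _).trans ?_
          gcongr
          exact hB z hz
      · intro z hz
        rw [hamVF_fderiv (hsm c), hamVF_fderiv (hsm c0)]
        have e1 : hamDX (Hfam c) lam z - hamDX (Hfam c0) lam0 z
            = (hamJ d).comp (fderiv ℝ (fderiv ℝ (Hfam c)) z - fderiv ℝ (fderiv ℝ (Hfam c0)) z)
              - (lam - lam0) • vproj d := by
          have es : (lam - lam0) • vproj d = lam • vproj d - lam0 • vproj d := by
            refine ContinuousLinearMap.ext fun ξ => ?_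
            exact sub_smul lam lam0 (vproj d ξ)
          rw [hamDX, hamDX, ContinuousLinearMap.comp_sub, es]; abel
        rw [e1]
        refine (norm_sub_le _ _).trans (le_trans ?_ hsum)
        refine add_le_add ((ContinuousLinearMap.opNorm_comp_le _ _).trans ?_) ?_
        · gcongr; exact (hcl z hz).2
        · rw [norm_smul, Real.norm_eq_abs]
          calc |lam - lam0| * nV ≤ δ4 * nV := by gcongr
            _ ≤ δ4 * nV * B := le_mul_of_one_le_right (by positivity) hB1
    have hgT := (height_facts (hsm c) (hflow c lam) hT0 (noConj_mono hT0.le ht hn)).2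
    have hd := hcont1 (x := fderiv ℝ (φfam c lam T) y) (by rw [dist_eq_norm]; linarith)
    rw [← hgT, ← hg0, dist_eq_norm] at hd
    intro v
    refine le_trans ?_ (hGreen_mono (hsm c) (hcvx c) (hflow c lam) hT0 ht hn v)
    set P := hGreenMinus (φfam c lam) T y
    set P0 := hGreenMinus (φfam c0 lam0) T x
    have hn1 : ‖S0 - P‖ ≤ ε := by
      have : S0 - P = -((P - P0) + (P0 - S0)) := by abel
      rw [this, norm_neg]
      exact (norm_add_le _ _).trans (by linarith)
    have h1 : ⟪(S0 - P) v, v⟫ ≤ ε * ⟪v, v⟫ := by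
      refine (real_inner_le_norm _ _).trans ?_
      rw [real_inner_self_eq_norm_mul_norm, ← mul_assoc]
      gcongr
      exact (S0 - P).le_of_opNorm_le hn1 v
    have h2 : ⟪(S0 - P) v, v⟫ = ⟪S0 v, v⟫ - ⟪P v, v⟫ := by
      rw [_root_.sub_apply, inner_sub_left]
    have h3 : ⟪(S0 - ε • ContinuousLinearMap.id ℝ (Euc d)) v, v⟫ = ⟪S0 v, v⟫ - ε * ⟪v, v⟫ := by
      rw [_root_.sub_apply, _root_.smul_apply, inner_sub_left, real_inner_smul_left]; rfl
    rw [h3]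
    linarith
  refine ⟨min δ2 (min δ3 δ4), by positivity, T, hT0, hpartA, ?_⟩
  intro y c lam hy hc hl hn S hS v
  have hlim : Tendsto (fun t => ⟪hGreenMinus (φfam c lam) t y v, v⟫) atTop (nhds ⟪S v, v⟫) := by
    have hcv : Continuous fun P : Euc d →L[ℝ] Euc d => ⟪P v, v⟫ := by fun_prop
    exact (hcv.tendsto S).comp hS
  refine ge_of_tendsto hlim ?_
  filter_upwards [eventually_ge_atTop T] with t ht
  exact hpartA y c lam t hy hc hl ht (hn t (hT0.le.trans ht)) v
end
end

section
/- For the pendulum Hamiltonian H(q,p) = p²/2 + cos(2πq) on 𝕋 × ℝ, set I₊ = ∫₀¹ √(2(1 − cos(2πq))) dq and c(e) = ∫₀¹ √(2(e − cos(2πq))) dq for e ≥ 1, and for I ∈ [I₊,∞) define u_I(q) = ∫₀^q ( √(2(c⁻¹(I) − cos(2πs))) − I ) ds. Then: (1) c : [1,∞) → [I₊,∞) is a homeomorphism and its restriction to (1,∞) is a diffeomorphism; (2) each u_I is C¹; (3) for every I > I₊ one has ‖u_I'' − u_{I₊}''‖_{L^∞} ≥ 1/4. In particular, the family of weak K.A.M.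 solutions (u_I) does not depend continuously on I at I = I₊ for the uniform C² distance. -/
/-!
The simple pendulum `H(q,p) = p²/2 + cos(2πq)` on `T^*𝕋 = 𝕋 × ℝ` (with `𝕋 = ℝ/ℤ`
modelled by `1`-periodic functions on `ℝ`).
-/

open Set Filter

noncomputable section

/-- `I₊ = ∫₀¹ √(2(1 - cos 2πq)) dq`. -/
def Iplus : ℝ := ∫ q in (0:ℝ)..1, Real.sqrt (2 * (1 - Real.cos (2 * Real.pi * q)))

/-- `c(e) = ∫₀¹ √(2(e - cos 2πq)) dq`. -/
def pendc (e : ℝ) : ℝ := ∫ q in (0:ℝ)..1, Real.sqrt (2 * (e - Real.cos (2 * Real.pi * q)))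

/-- The inverse `c⁻¹ : [I₊, ∞) → [1, ∞)` of `c`. -/
def pendcInv : ℝ → ℝ := Function.invFunOn pendc (Ici 1)

/-- The weak K.A.M. solution `u_I(q) = ∫₀^q (√(2(c⁻¹(I) - cos 2πs)) - I) ds` for the
cohomology class `I ∈ [I₊, ∞)`. -/
def uPend (I q : ℝ) : ℝ :=
  ∫ s in (0:ℝ)..q, (Real.sqrt (2 * (pendcInv I - Real.cos (2 * Real.pi * s))) - I)

lemma pend_F_cont : Continuous
    (fun p : ℝ × ℝ => Real.sqrt (2 * (p.1 - Real.cos (2 * Real.pi * p.2)))) := by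
  fun_prop

lemma pend_F_cont2 (e : ℝ) : Continuous
    (fun q : ℝ => Real.sqrt (2 * (e - Real.cos (2 * Real.pi * q)))) := by
  fun_prop

lemma pendc_cont : Continuous pendc := by
  unfold pendc
  exact intervalIntegral.continuous_parametric_intervalIntegral_of_continuous'
    (f := fun e q => Real.sqrt (2 * (e - Real.cos (2 * Real.pi * q)))) pend_F_cont 0 1

lemma pendc_one : pendc 1 = Iplus := rfl

lemma pendc_strictMonoOn : StrictMonoOn pendc (Ici 1) := by
  intro a ha b hb hab
  have ha' : (1:ℝ) ≤ a := ha
  unfold pendc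
  have key : ∀ x : ℝ, Real.sqrt (2 * (a - Real.cos (2 * Real.pi * x))) <
      Real.sqrt (2 * (b - Real.cos (2 * Real.pi * x))) := by
    intro x
    have := Real.cos_le_one (2 * Real.pi * x)
    apply Real.sqrt_lt_sqrt <;> linarith
  apply intervalIntegral.integral_lt_integral_of_continuousOn_of_le_of_exists_lt (by norm_num)
  · exact (pend_F_cont2 a).continuousOn
  · exact (pend_F_cont2 b).continuousOn
  · intro x _; exact (key x).le
  · exact ⟨0, by norm_num, key 0⟩

lemma pendc_lower (e : ℝ) : Real.sqrt (2 * (e - 1)) ≤ pendc e := by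
  unfold pendc
  have : Real.sqrt (2 * (e - 1)) = ∫ q in (0:ℝ)..1, Real.sqrt (2 * (e - 1)) := by simp
  rw [this]
  apply intervalIntegral.integral_mono_on (by norm_num) (by simp)
    ((pend_F_cont2 e).intervalIntegrable _ _)
  intro x _
  apply Real.sqrt_le_sqrt
  have := Real.cos_le_one (2 * Real.pi * x)
  linarith

lemma pendc_bijOn : Set.BijOn pendc (Ici 1) (Ici Iplus) := by
  refine ⟨?_, pendc_strictMonoOn.injOn, ?_⟩
  · intro e he
    show Iplus ≤ pendc e
    rw [← pendc_one]
    exact pendc_strictMonoOn.monotoneOn (mem_Ici.2 le_rfl) he he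
  · intro y hy
    have h1 : (1:ℝ) ≤ 1 + y ^ 2 / 2 := by nlinarith [sq_nonneg y]
    have h2 : y ≤ pendc (1 + y ^ 2 / 2) := by
      refine le_trans ?_ (pendc_lower _)
      have : 2 * (1 + y ^ 2 / 2 - 1) = y ^ 2 := by ring
      rw [this]
      exact Real.le_sqrt_of_sq_le le_rfl
    obtain ⟨x, hx, hxy⟩ := intermediate_value_Icc h1 pendc_cont.continuousOn
      (show y ∈ Icc (pendc 1) _ from ⟨by rw [pendc_one]; exact hy, h2⟩)
    exact ⟨x, hx.1, hxy⟩

lemma pendcInv_mem {y : ℝ} (hy : y ∈ Ici Iplus) : pendcInv y ∈ Ici (1:ℝ) :=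
  Function.invFunOn_mem (pendc_bijOn.surjOn hy)

lemma pendc_pendcInv {y : ℝ} (hy : y ∈ Ici Iplus) : pendc (pendcInv y) = y :=
  Function.invFunOn_eq (pendc_bijOn.surjOn hy)

lemma pendcInv_pendc {e : ℝ} (he : e ∈ Ici (1:ℝ)) : pendcInv (pendc e) = e :=
  pendc_bijOn.injOn (pendcInv_mem (pendc_bijOn.mapsTo he)) he
    (pendc_pendcInv (pendc_bijOn.mapsTo he))

lemma pendcInv_gt {y : ℝ} (hy : y ∈ Ioi Iplus) : 1 < pendcInv y := by
  have h : y ∈ Ici Iplus := Ioi_subset_Ici_self hy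
  refine lt_of_le_of_ne (pendcInv_mem h) ?_
  intro h1
  have h2 := pendc_pendcInv h
  rw [← h1, pendc_one] at h2
  exact absurd h2 (ne_of_lt hy)

lemma pendcInv_continuousOn : ContinuousOn pendcInv (Ici Iplus) := by
  let g : Ici Iplus → Ici (1:ℝ) := fun y => ⟨pendcInv y, pendcInv_mem y.2⟩
  have hmono : Monotone g := by
    intro a b hab
    show pendcInv a ≤ pendcInv b
    rw [← pendc_strictMonoOn.le_iff_le (pendcInv_mem a.2) (pendcInv_mem b.2),
      pendc_pendcInv a.2, pendc_pendcInv b.2]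
    exact hab
  have hsurj : Function.Surjective g := by
    intro e
    exact ⟨⟨pendc e, pendc_bijOn.mapsTo e.2⟩, Subtype.ext (pendcInv_pendc e.2)⟩
  have hc : Continuous g := hmono.continuous_of_surjective hsurj
  rw [continuousOn_iff_continuous_domRestrict]
  exact continuous_subtype_val.comp hc

lemma pendc_hasDeriv {e : ℝ} (he : 1 < e) : ∃ c' : ℝ, c' ≠ 0 ∧ HasDerivAt pendc c' e := by
  let F' : ℝ → ℝ → ℝ := fun x q => 1 / Real.sqrt (2 * (x - Real.cos (2 * Real.pi * q)))
  have hpos : ∀ x ∈ Ioi ((1 + e) / 2), ∀ q : ℝ,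
      e - 1 ≤ 2 * (x - Real.cos (2 * Real.pi * q)) := by
    intro x hx q
    have hx : (1 + e) / 2 < x := hx
    have := Real.cos_le_one (2 * Real.pi * q)
    linarith
  have hem : e ∈ Ioi ((1 + e) / 2) := by show (1 + e) / 2 < e; linarith
  have hF'c : Continuous (F' e) := by
    apply Continuous.div continuous_const (pend_F_cont2 e)
    intro q
    have := hpos e hem q
    exact (Real.sqrt_pos.2 (by linarith)).ne'
  have hd := intervalIntegral.hasDerivAt_integral_of_dominated_loc_of_deriv_le
    (μ := MeasureTheory.volume) (a := (0:ℝ)) (b := 1)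
    (F := fun x q => Real.sqrt (2 * (x - Real.cos (2 * Real.pi * q)))) (F' := F') (x₀ := e)
    (s := Ioi ((1 + e) / 2)) (bound := fun _ => 1 / Real.sqrt (e - 1))
    (Ioi_mem_nhds hem)
    (Eventually.of_forall fun x => (pend_F_cont2 x).aestronglyMeasurable)
    ((pend_F_cont2 e).intervalIntegrable _ _)
    hF'c.aestronglyMeasurable
    (Eventually.of_forall fun q _ x hx => by
      have h := hpos x hx q
      have h1 : 0 < Real.sqrt (e - 1) := Real.sqrt_pos.2 (by linarith)
      have h2 := Real.sqrt_le_sqrt h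
      rw [Real.norm_of_nonneg (by positivity)]
      exact one_div_le_one_div_of_le h1 h2)
    intervalIntegrable_const
    (Eventually.of_forall fun q _ x hx => by
      have h := hpos x hx q
      have h3 : HasDerivAt (fun x : ℝ => 2 * (x - Real.cos (2 * Real.pi * q))) 2 x := by
        simpa using ((hasDerivAt_id x).sub_const (Real.cos (2 * Real.pi * q))).const_mul 2
      have h4 := h3.sqrt (by linarith)
      refine h4.congr_deriv ?_
      show _ = 1 / Real.sqrt (2 * (x - Real.cos (2 * Real.pi * q)))
      have : 0 < Real.sqrt (2 * (x - Real.cos (2 * Real.pi * q))) :=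
        Real.sqrt_pos.2 (by linarith)
      field_simp)
  refine ⟨_, ?_, hd.2⟩
  apply ne_of_gt
  apply intervalIntegral.intervalIntegral_pos_of_pos_on (hF'c.intervalIntegrable _ _)
  · intro q _
    have := hpos e hem q
    have := Real.sqrt_pos.2 (show 0 < 2 * (e - Real.cos (2 * Real.pi * q)) by linarith)
    positivity
  · norm_num

lemma pendcInv_hasDeriv {e c' : ℝ} (he : 1 < e) (hc : c' ≠ 0) (hd : HasDerivAt pendc c' e) :
    HasDerivAt pendcInv c'⁻¹ (pendc e) := by
  have hlt : Iplus < pendc e := by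
    rw [← pendc_one]
    exact pendc_strictMonoOn (mem_Ici.2 le_rfl) (mem_Ici.2 he.le) he
  have hn : Ici Iplus ∈ nhds (pendc e) := Ici_mem_nhds hlt
  apply HasDerivAt.of_local_left_inverse (f := pendc)
  · exact pendcInv_continuousOn.continuousAt hn
  · rw [pendcInv_pendc (mem_Ici.2 he.le)]; exact hd
  · exact hc
  · filter_upwards [hn] with y hy using pendc_pendcInv hy

lemma uPend_hasDeriv (I q : ℝ) : HasDerivAt (uPend I)
    (Real.sqrt (2 * (pendcInv I - Real.cos (2 * Real.pi * q))) - I) q := by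
  have hc : Continuous
    (fun s : ℝ => Real.sqrt (2 * (pendcInv I - Real.cos (2 * Real.pi * s))) - I) :=
    (pend_F_cont2 _).sub continuous_const
  exact intervalIntegral.integral_hasDerivAt_right (hc.intervalIntegrable _ _)
    (hc.stronglyMeasurableAtFilter _ _) hc.continuousAt

lemma uPend_deriv (I : ℝ) : deriv (uPend I) =
    fun q => Real.sqrt (2 * (pendcInv I - Real.cos (2 * Real.pi * q))) - I :=
  funext fun q => (uPend_hasDeriv I q).deriv

lemma uPend_contDiff (I : ℝ) : ContDiff ℝ 1 (uPend I) := by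
  rw [contDiff_one_iff_deriv]
  refine ⟨fun q => (uPend_hasDeriv I q).differentiableAt, ?_⟩
  rw [uPend_deriv]
  exact (pend_F_cont2 _).sub continuous_const

lemma uPend_deriv2 {I q : ℝ} (h : Real.cos (2 * Real.pi * q) < pendcInv I) :
    deriv (deriv (uPend I)) q = 2 * Real.pi * Real.sin (2 * Real.pi * q) /
      Real.sqrt (2 * (pendcInv I - Real.cos (2 * Real.pi * q))) := by
  rw [uPend_deriv]
  have h0 : HasDerivAt (fun q : ℝ => 2 * Real.pi * q) (2 * Real.pi) q := by
    simpa using (hasDerivAt_id q).const_mul (2 * Real.pi)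
  have h1 := (((h0.cos).const_sub (pendcInv I)).const_mul 2).sqrt
    (by linarith)
  have h2 := (h1.sub_const I).deriv
  rw [h2]
  have : 0 < Real.sqrt (2 * (pendcInv I - Real.cos (2 * Real.pi * q))) :=
    Real.sqrt_pos.2 (by linarith)
  field_simp
  try ring

lemma uPend_deriv2_bound {I q : ℝ} (hI : 1 ≤ pendcInv I)
    (h : Real.cos (2 * Real.pi * q) < pendcInv I) :
    |deriv (deriv (uPend I)) q| ≤ 2 * Real.pi := by
  rw [uPend_deriv2 h]
  have hs : 0 < Real.sqrt (2 * (pendcInv I - Real.cos (2 * Real.pi * q))) :=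
    Real.sqrt_pos.2 (by linarith)
  rw [abs_div, abs_of_pos hs, div_le_iff₀ hs, abs_mul, abs_of_pos (by positivity)]
  apply mul_le_mul_of_nonneg_left _ (by positivity)
  apply Real.abs_le_sqrt
  have := Real.sin_sq_add_cos_sq (2 * Real.pi * q)
  nlinarith [sq_nonneg (Real.cos (2 * Real.pi * q) - 1)]

lemma pend_cos_eq (q : ℝ) :
    Real.cos (2 * Real.pi * q) = 1 - 2 * Real.sin (Real.pi * q) ^ 2 := by
  have h : 2 * Real.pi * q = 2 * (Real.pi * q) := by ring
  rw [h, Real.cos_two_mul]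
  nlinarith [Real.sin_sq_add_cos_sq (Real.pi * q)]

lemma pend_sin_pos {q : ℝ} (h0 : 0 < q) (h1 : q < 1) : 0 < Real.sin (Real.pi * q) := by
  apply Real.sin_pos_of_pos_of_lt_pi
  · positivity
  · nlinarith [Real.pi_pos]

lemma pend_cos_lt {q : ℝ} (h0 : 0 < q) (h1 : q < 1) : Real.cos (2 * Real.pi * q) < 1 := by
  have := pend_sin_pos h0 h1
  rw [pend_cos_eq]
  nlinarith

lemma pendcInv_Iplus : pendcInv Iplus = 1 := by
  rw [← pendc_one]; exact pendcInv_pendc (mem_Ici.2 le_rfl)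

lemma uPend_deriv2_Iplus {q : ℝ} (h0 : 0 < q) (h1 : q < 1) :
    deriv (deriv (uPend Iplus)) q = 2 * Real.pi * Real.cos (Real.pi * q) := by
  have hs := pend_sin_pos h0 h1
  rw [uPend_deriv2 (by rw [pendcInv_Iplus]; exact pend_cos_lt h0 h1), pendcInv_Iplus,
    pend_cos_eq]
  have h : 2 * (1 - (1 - 2 * Real.sin (Real.pi * q) ^ 2)) = (2 * Real.sin (Real.pi * q)) ^ 2 := by
    ring
  rw [h, Real.sqrt_sq (by linarith)]
  have h' : 2 * Real.pi * q = 2 * (Real.pi * q) := by ring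
  rw [h', Real.sin_two_mul]
  field_simp

lemma pend_measure {I : ℝ} (hI : I ∈ Ioi Iplus) :
    0 < MeasureTheory.volume {q : ℝ | q ∈ Icc (0:ℝ) 1 ∧
      1/4 ≤ |deriv (deriv (uPend I)) q - deriv (deriv (uPend Iplus)) q|} := by
  have he := pendcInv_gt hI
  have hlt : ∀ q : ℝ, Real.cos (2 * Real.pi * q) < pendcInv I := fun q =>
    (Real.cos_le_one _).trans_lt he
  let K : ℝ → ℝ := fun q => |2 * Real.pi * Real.sin (2 * Real.pi * q) /
      Real.sqrt (2 * (pendcInv I - Real.cos (2 * Real.pi * q))) -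
      2 * Real.pi * Real.cos (Real.pi * q)|
  have hK : Continuous K := by
    apply Continuous.abs
    apply Continuous.sub _ (by fun_prop)
    apply Continuous.div (by fun_prop) (pend_F_cont2 _)
    intro q
    have := hlt q
    exact (Real.sqrt_pos.2 (by linarith)).ne'
  have hK0 : 1 / 4 < K 0 := by
    simp only [K]
    simp
    rw [abs_of_pos Real.pi_pos]
    linarith [Real.pi_gt_three]
  have hev : ∀ᶠ q in nhds (0:ℝ), 1 / 4 < K q := hK.continuousAt.eventually_const_lt hK0
  obtain ⟨δ, hδ, hball⟩ := Metric.eventually_nhds_iff.1 hev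
  have hsub : Ioo (0:ℝ) (min δ 1) ⊆ {q : ℝ | q ∈ Icc (0:ℝ) 1 ∧
      1/4 ≤ |deriv (deriv (uPend I)) q - deriv (deriv (uPend Iplus)) q|} := by
    intro q hq
    have h1 : q < 1 := hq.2.trans_le (min_le_right _ _)
    refine ⟨⟨hq.1.le, h1.le⟩, ?_⟩
    rw [uPend_deriv2 (hlt q), uPend_deriv2_Iplus hq.1 h1]
    apply le_of_lt
    apply hball
    rw [Real.dist_eq, sub_zero, abs_of_pos hq.1]
    exact hq.2.trans_le (min_le_left _ _)
  refine lt_of_lt_of_le ?_ (MeasureTheory.measure_mono hsub)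
  rw [Real.volume_Ioo]
  simp [hδ]

lemma pend_sup {I : ℝ} (hI : I ∈ Ioi Iplus) :
    1 / 4 ≤ ⨆ q : Icc (0:ℝ) 1,
      |deriv (deriv (uPend I)) (q : ℝ) - deriv (deriv (uPend Iplus)) (q : ℝ)| := by
  obtain ⟨q, hq, hq'⟩ := MeasureTheory.nonempty_of_measure_ne_zero (pend_measure hI).ne'
  have he := pendcInv_gt hI
  refine le_trans hq' (le_ciSup
    (f := fun q : Icc (0:ℝ) 1 =>
      |deriv (deriv (uPend I)) (q : ℝ) - deriv (deriv (uPend Iplus)) (q : ℝ)|) ?_ ⟨q, hq⟩)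
  refine ⟨2 * Real.pi + (2 * Real.pi + |deriv (deriv (uPend Iplus)) 0| +
    |deriv (deriv (uPend Iplus)) 1|), ?_⟩
  rintro _ ⟨⟨x, hx0, hx1⟩, rfl⟩
  refine (abs_sub _ _).trans (add_le_add
    (uPend_deriv2_bound he.le ((Real.cos_le_one _).trans_lt he)) ?_)
  have a0 := abs_nonneg (deriv (deriv (uPend Iplus)) 0)
  have a1 := abs_nonneg (deriv (deriv (uPend Iplus)) 1)
  have hp := Real.pi_pos
  simp only
  rcases hx0.eq_or_lt with rfl | h0
  · linarith
  rcases hx1.eq_or_lt with rfl | h1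
  · linarith
  have := uPend_deriv2_bound (I := Iplus) (q := x) pendcInv_Iplus.ge
    (by rw [pendcInv_Iplus]; exact pend_cos_lt h0 h1)
  linarith


/-- **(Pendulum example: no uniform `C²` dependence on the cohomology class.)**
(1) `c : [1,∞) → [I₊,∞)` is a homeomorphism whose restriction to `(1,∞)` is a
diffeomorphism; (2) each `u_I`, `I ≥ I₊`, is `C¹`; (3) for every `I > I₊` the essential
supremum of `|u_I'' - u_{I₊}''|` is at least `1/4` (indeed `≥ 1/4` holds on a set of
positive measure); in particular (4) `I ↦ u_I` is not continuous at `I₊` for the uniform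
`C²` distance. -/
theorem stmt_18 :
    (Set.BijOn pendc (Ici 1) (Ici Iplus) ∧
      ContinuousOn pendc (Ici 1) ∧
      ContinuousOn pendcInv (Ici Iplus) ∧
      ∀ e ∈ Ioi (1:ℝ), ∃ c' : ℝ, c' ≠ 0 ∧ HasDerivAt pendc c' e ∧
        HasDerivAt pendcInv c'⁻¹ (pendc e)) ∧
    (∀ I ∈ Ici Iplus, ContDiff ℝ 1 (uPend I)) ∧
    (∀ I ∈ Ioi Iplus, 0 < MeasureTheory.volume {q : ℝ | q ∈ Icc (0:ℝ) 1 ∧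
      1/4 ≤ |deriv (deriv (uPend I)) q - deriv (deriv (uPend Iplus)) q|}) ∧
    ¬ Tendsto
        (fun I => ⨆ q : Icc (0:ℝ) 1,
          |deriv (deriv (uPend I)) (q : ℝ) - deriv (deriv (uPend Iplus)) (q : ℝ)|)
        (nhdsWithin Iplus (Ioi Iplus)) (nhds 0) := by
  refine ⟨⟨pendc_bijOn, pendc_cont.continuousOn, pendcInv_continuousOn, ?_⟩,
    fun I _ => uPend_contDiff I, fun I hI => pend_measure hI, ?_⟩
  · intro e he
    obtain ⟨c', hc, hd⟩ := pendc_hasDeriv he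
    exact ⟨c', hc, hd, pendcInv_hasDeriv he hc hd⟩
  · intro h
    have h1 : (1 / 4 : ℝ) ≤ 0 := by
      refine ge_of_tendsto h ?_
      filter_upwards [self_mem_nhdsWithin] with I hI using pend_sup hI
    norm_num at h1
end
end
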